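/- Let (R, m) be a d-dimensional complete Noetherian local domain of prime characteristic p with absolute integral closure R^+, and let x_1, …, x_d be a system of parameters of R. Then for every 1 ≤ n ≤ d − 1 and every y ∈ R, there exists a positive integer N_0 such that for all integers N ≥ N_0, (x_1, …, x_n, y^N)R^+ :_{R^+} x_{n+1} ⊆ (x_1, …, x_n, y^{N−N_0})R^+. -/

import Mathlib

open IsLocalRing TensorProduct
set_option synthInstance.maxHeartbeats 1000000
set_option maxHeartbeats 1000000

/-- The absolute integral closure `R⁺` of a domain `R`: the integral closure of `R`
in an algebraic closure of its fraction field. -/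
noncomputable abbrev RPlus (R : Type) [CommRing R] [IsDomain R] : Type :=
  ↥(integralClosure R (AlgebraicClosure (FractionRing R)))

/-- A system of parameters of a local ring: `d` elements generating an ideal whose
radical is the maximal ideal, where `d` is the Krull dimension. -/
def IsSOP (R : Type) [CommRing R] [IsLocalRing R] {d : ℕ} (x : Fin d → R) : Prop :=
  ringKrullDim R = d ∧ (Ideal.span (Set.range x)).radical = maximalIdeal R

/-!
By the Cohen structure theorem `R` is integral over `A = k⟦X₁, …, X_d⟧` with `X_i ↦ x_i`, so `R⁺` is
an absolutely integrally closed integral extension domain `T` of `A`.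

By Hochster–Huneke `T` is flat over `A`. Arguing by induction on the height of a prime we may
localize and assume that `T` is flat away from the closed point. Then the local cohomology classes
arising from the Frobenius powers of a relation on a regular sequence have bounded denominators,
hence satisfy an additive polynomial equation. Such equations can be solved in `T`, so regular
sequences of `A` remain regular on `T`, and this together with the finite flat dimension of `T`
gives flatness.

Let `P = (X₁, …, X_{n+1})`. By flatness `T / PT` is torsion-free over the domain `A / P`. If the
image of `y` in it is a root of a monic `X ^ e * h` with `h(0) ≠ 0`, then every element killed by a
power of `y` is killed by `y ^ e`. So if `x_{n+1} u ≡ c y ^ N` modulo `J = (x₁, …, x_n)T`, then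
`c y ^ e ≡ v x_{n+1}`, and since `x_{n+1}` is regular modulo `J`, `u ≡ v y ^ (N - e)`.
-/

universe u

section AbsolutelyIntegrallyClosed

open Polynomial

/-- A ring is absolutely integrally closed if every nonconstant monic polynomial has a root. This
abstracts `R⁺` in a form that passes to localizations. -/
def IsAbsIntegrallyClosed (C : Type*) [CommRing C] : Prop :=
  ∀ f : C[X], f.Monic → 0 < f.natDegree → ∃ c, f.IsRoot c

variable {C : Type*} [CommRing C]

lemma IsAbsIntegrallyClosed.mem_range_algebraMap (h : IsAbsIntegrallyClosed C) {K : Type*}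
    [CommRing K] [IsDomain K] [Algebra C K] {f : C[X]} (hf : f.Monic) {z : K}
    (hz : aeval z f = 0) : z ∈ (algebraMap C K).range := by
  induction hn : f.natDegree generalizing f with
  | zero => simp [hf.natDegree_eq_zero.mp hn] at hz
  | succ n ih =>
    obtain ⟨c, hc⟩ := h f hf (by omega)
    obtain ⟨g, rfl⟩ := dvd_iff_isRoot.mpr hc
    have hg : g.Monic := (monic_X_sub_C c).of_mul_monic_left hf
    have : Nontrivial C := ⟨0, 1, fun h01 => by
      simpa [← map_one (algebraMap C K), ← h01] using one_ne_zero (α := K)⟩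
    rw [(monic_X_sub_C c).natDegree_mul hg, natDegree_X_sub_C] at hn
    rcases mul_eq_zero.mp (map_mul (aeval z) _ g ▸ hz) with hzc | hzg
    · exact ⟨c, (sub_eq_zero.mp (by simpa using hzc)).symm⟩
    · exact ih hg hzg (by omega)

variable (p M N : ℕ) (b : ℕ → C)

/-- A monic polynomial with exponents `p ^ j`, `M ≤ j ≤ N`, hence additive in characteristic `p`.
Linear relations between Frobenius powers of an element are equations of this form. -/
noncomputable def additivePoly : C[X] :=
  X ^ p ^ N - ∑ j ∈ Finset.Ico M N, Polynomial.C (b j) * X ^ p ^ j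

lemma eval_additivePoly (u : C) :
    (additivePoly p M N b).eval u = u ^ p ^ N - ∑ j ∈ Finset.Ico M N, b j * u ^ p ^ j := by
  simp [additivePoly, eval_finsetSum]

variable [Fact p.Prime]

lemma degree_sum_C_mul_X_pow_pow_lt :
    (∑ j ∈ Finset.Ico M N, Polynomial.C (b j) * X ^ p ^ j : C[X]).degree < (p ^ N : ℕ) := by
  refine (degree_sum_le _ _).trans_lt
    ((Finset.sup_lt_iff (WithBot.bot_lt_coe _)).mpr fun j hj => ?_)
  exact (degree_C_mul_X_pow_le _ _).trans_lt (by
    exact_mod_cast Nat.pow_lt_pow_right (Fact.out : p.Prime).one_lt (Finset.mem_Ico.mp hj).2)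

lemma monic_additivePoly_sub_C (c : C) : (additivePoly p M N b - Polynomial.C c).Monic := by
  rw [additivePoly, sub_sub]
  refine monic_X_pow_sub ((degree_add_le _ _).trans_lt
    (max_lt (degree_sum_C_mul_X_pow_pow_lt p M N b) ?_))
  exact degree_C_le.trans_lt (by exact_mod_cast pow_pos (Fact.out : p.Prime).pos N)

lemma natDegree_additivePoly_sub_C_pos [Nontrivial C] (c : C) :
    0 < (additivePoly p M N b - Polynomial.C c).natDegree := by
  rw [natDegree_sub_C, natDegree_eq_of_degree_eq_some (n := p ^ N)]
  · exact pow_pos (Fact.out : p.Prime).pos N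
  · rw [additivePoly, degree_sub_eq_left_of_degree_lt, degree_X_pow]
    simpa only [degree_X_pow] using degree_sum_C_mul_X_pow_pow_lt p M N b

variable {p M N}

lemma IsAbsIntegrallyClosed.exists_eval_additivePoly_eq [Nontrivial C]
    (h : IsAbsIntegrallyClosed C) (c : C) : ∃ z, (additivePoly p M N b).eval z = c := by
  obtain ⟨z, hz⟩ := h _ (monic_additivePoly_sub_C p M N b c)
    (natDegree_additivePoly_sub_C_pos p M N b c)
  exact ⟨z, by simpa [IsRoot, sub_eq_zero] using hz⟩

lemma eval_additivePoly_add [CharP C p] (u v : C) : (additivePoly p M N b).eval (u + v) =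
    (additivePoly p M N b).eval u + (additivePoly p M N b).eval v := by
  simp only [eval_additivePoly, add_pow_char_pow, mul_add, Finset.sum_add_distrib]
  ring

lemma eval_additivePoly_sub [CharP C p] (u v : C) : (additivePoly p M N b).eval (u - v) =
    (additivePoly p M N b).eval u - (additivePoly p M N b).eval v :=
  eq_sub_of_add_eq (by rw [← eval_additivePoly_add, sub_add_cancel])

lemma eval_additivePoly_mul (r z : C) :
    (additivePoly p M N fun j => b j * r ^ (p ^ N - p ^ j)).eval (r * z) =
      r ^ p ^ N * (additivePoly p M N b).eval z := by
  simp only [eval_additivePoly, mul_sub, Finset.mul_sum, mul_pow]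
  congr 1
  refine Finset.sum_congr rfl fun j hj => ?_
  have hle : p ^ j ≤ p ^ N :=
    Nat.pow_le_pow_right (Fact.out : p.Prime).pos (Finset.mem_Ico.mp hj).2.le
  rw [← pow_sub_mul_pow r hle]
  ring

lemma IsAbsIntegrallyClosed.dvd_of_eval_additivePoly_eq_zero [IsDomain C]
    (h : IsAbsIntegrallyClosed C) {r w : C} (hr : r ≠ 0)
    (hw : (additivePoly p M N fun j => b j * r ^ (p ^ N - p ^ j)).eval w = 0) : r ∣ w := by
  let K := FractionRing C
  have hrK : algebraMap C K r ≠ 0 := by simpa using hr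
  set z : K := algebraMap C K w / algebraMap C K r
  have map_poly (b : ℕ → C) : (additivePoly p M N b).map (algebraMap C K) =
      additivePoly p M N fun j => algebraMap C K (b j) := by
    simp [additivePoly, Polynomial.map_sum]
  have hz : aeval z (additivePoly p M N b) = 0 := by
    have hscaled := congrArg (algebraMap C K) hw
    rw [← eval_map_algebraMap, map_poly]
    rw [← eval_map_apply, map_poly, map_zero] at hscaled
    simp only [map_mul, map_pow] at hscaled
    rw [← mul_div_cancel₀ (algebraMap C K w) hrK, eval_additivePoly_mul] at hscaled
    exact (mul_eq_zero.mp hscaled).resolve_left (pow_ne_zero _ hrK)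
  obtain ⟨c, hc⟩ := h.mem_range_algebraMap
    (by simpa using monic_additivePoly_sub_C p M N b 0) hz
  refine ⟨c, FaithfulSMul.algebraMap_injective C K ?_⟩
  rw [map_mul, hc, mul_div_cancel₀ _ hrK]

/-- The equational lemma of Hochster–Huneke and Huneke–Lyubeznik: first the roots of additive
equations correct `u` by an element of `(x_i)`, then the corrected element is divisible by `∏ x_i`
in the fraction field, the quotient being integral. -/
lemma IsAbsIntegrallyClosed.mem_span_of_additive_relation [IsDomain C] [CharP C p]
    (h : IsAbsIntegrallyClosed C) {ι : Type*} {s : Finset ι} (hs : s.Nonempty) (x : ι → C)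
    (hx : ∀ i ∈ s, x i ≠ 0) {u : C}
    (hu : (additivePoly p M N fun j => b j * (∏ i ∈ s, x i) ^ (p ^ N - p ^ j)).eval u ∈
      Ideal.span ((fun i => x i ^ p ^ N) '' s)) :
    u ∈ Ideal.span (x '' s) := by
  classical
  set P := additivePoly p M N fun j => b j * (∏ i ∈ s, x i) ^ (p ^ N - p ^ j)
  have exists_correction : ∀ a ∈ Ideal.span ((fun i => x i ^ p ^ N) '' (s : Set ι)),
      ∃ v ∈ Ideal.span (x '' s), P.eval v = a := by
    intro a ha
    obtain ⟨c, rfl⟩ := (Submodule.mem_span_image_finset_iff_exists_fun C).mp ha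
    refine Finset.sum_induction _ (fun a => ∃ v ∈ Ideal.span (x '' s), P.eval v = a) ?_
      ⟨0, zero_mem _, by simpa using eval_additivePoly_sub _ (0 : C) 0⟩ fun l _ => ?_
    · rintro _ _ ⟨v, hv, rfl⟩ ⟨w, hw, rfl⟩
      exact ⟨v + w, add_mem hv hw, eval_additivePoly_add _ v w⟩
    · obtain ⟨z, hz⟩ := h.exists_eval_additivePoly_eq (p := p) (M := M) (N := N)
        (fun j => b j * (∏ i ∈ s.erase l, x i) ^ (p ^ N - p ^ j)) (c l)
      refine ⟨x l * z, Ideal.mul_mem_right _ _ (Ideal.subset_span ⟨l, l.2, rfl⟩), ?_⟩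
      rw [smul_eq_mul, mul_comm (c l), ← hz, ← eval_additivePoly_mul]
      simp only [P, ← Finset.mul_prod_erase s x l.2, mul_pow, mul_comm, mul_left_comm]
  obtain ⟨v, hv, hPv⟩ := exists_correction _ hu
  have hprod : ∏ i ∈ s, x i ∣ u - v :=
    h.dvd_of_eval_additivePoly_eq_zero b (Finset.prod_ne_zero_iff.mpr hx)
      (by rw [eval_additivePoly_sub, hPv, sub_self])
  obtain ⟨i, hi⟩ := hs
  have hxi : x i ∈ Ideal.span (x '' s) := Ideal.subset_span ⟨i, hi, rfl⟩
  rw [← sub_add_cancel u v]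
  exact add_mem (Ideal.mem_of_dvd _ ((Finset.dvd_prod_of_mem x hi).trans hprod) hxi) hv

end AbsolutelyIntegrallyClosed

section RegularSets

variable {B M : Type*} [CommRing B] [AddCommGroup M] [Module B M]

lemma mem_sup_span_singleton_smul {J : Ideal B} {a : B} {N : Submodule B M} {m : M} :
    m ∈ (J ⊔ Ideal.span {a}) • N ↔ ∃ n ∈ N, m - a • n ∈ J • N := by
  rw [Submodule.sup_smul, Submodule.ideal_span_singleton_smul, Submodule.mem_sup]
  constructor
  · rintro ⟨j, hj, _, ⟨n, hn, rfl⟩, rfl⟩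
    exact ⟨n, hn, by simpa using hj⟩
  · rintro ⟨n, hn, hj⟩
    exact ⟨_, hj, _, Submodule.smul_mem_pointwise_smul n a N hn, sub_add_cancel _ _⟩

lemma isSMulRegular_quot_smul_top_of_flat [Module.Flat B M] {J : Ideal B} {z : B}
    (hz : IsSMulRegular (B ⧸ (J • ⊤ : Submodule B B)) z) :
    IsSMulRegular (M ⧸ (J • ⊤ : Submodule B M)) z := by
  rw [smul_eq_mul, Ideal.mul_top] at hz
  exact ((TensorProduct.quotTensorEquivQuotSMul M J).isSMulRegular_congr z).mp (hz.rTensor M)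

lemma isSMulRegular_quot_sup_span_pow {J : Ideal B} {z w : B}
    (hz : IsSMulRegular (M ⧸ (J • ⊤ : Submodule B M)) z)
    (hw : IsSMulRegular (M ⧸ ((J ⊔ Ideal.span {z}) • ⊤ : Submodule B M)) w) (k : ℕ) :
    IsSMulRegular (M ⧸ ((J ⊔ Ideal.span {z ^ k}) • ⊤ : Submodule B M)) w := by
  simp only [isSMulRegular_quotient_iff_mem_of_smul_mem, mem_sup_span_singleton_smul] at hz hw ⊢
  induction k with
  | zero => exact fun m _ => ⟨m, trivial, by simp⟩
  | succ k ih =>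
    rintro m ⟨n, -, hn⟩
    obtain ⟨m₁, -, hm₁⟩ := hw m ⟨z ^ k • n, trivial, by rwa [smul_smul, ← pow_succ']⟩
    have hwm₁ : w • m₁ - z ^ k • n ∈ J • (⊤ : Submodule B M) := hz _ <| by
      convert sub_mem hn (Submodule.smul_mem _ w hm₁) using 1
      rw [pow_succ']
      module
    obtain ⟨m₂, -, hm₂⟩ := ih m₁ ⟨n, trivial, hwm₁⟩
    refine ⟨m₂, trivial, ?_⟩
    convert add_mem hm₁ (Submodule.smul_mem _ z hm₂) using 1
    rw [pow_succ']
    module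

variable (M) in
/-- A set `S` of ring elements is regular on `M` if each `z ∈ S` is a nonzerodivisor modulo any
finite set of other elements of `S`. For finite `S` this says that every ordering of `S` is a
weakly regular sequence. -/
def IsRegularSet (S : Set B) : Prop :=
  ∀ T : Finset B, ↑T ⊆ S → ∀ z ∈ S, z ∉ T →
    IsSMulRegular (M ⧸ (Ideal.span (T : Set B) • ⊤ : Submodule B M)) z

namespace IsRegularSet

variable {S S' : Set B}

lemma mono (h : IsRegularSet M S) (hS : S' ⊆ S) : IsRegularSet M S' :=
  fun T hT z hz => h T (hT.trans hS) z (hS hz)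

lemma of_flat [Module.Flat B M] (h : IsRegularSet B S) : IsRegularSet M S :=
  fun T hT z hz hzT => isSMulRegular_quot_smul_top_of_flat (h T hT z hz hzT)

lemma isSMulRegular (h : IsRegularSet M S) {z : B} (hz : z ∈ S) : IsSMulRegular M z := by
  have hz' := h ∅ (by simp) z hz (by simp)
  rw [isSMulRegular_quotient_iff_mem_of_smul_mem] at hz'
  exact .of_right_eq_zero_of_smul fun m hm => by simpa [hm] using hz' m

end IsRegularSet

/-- The ideal generated by the powers `x ^ τ x` for `x ∈ s`, with separate exponents so that they
can be changed one at a time. -/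
def powIdeal (s : Finset B) (τ : B → ℕ) : Ideal B := Ideal.span ((fun x => x ^ τ x) '' s)

lemma pow_mem_powIdeal {s : Finset B} {τ : B → ℕ} {x : B} (hx : x ∈ s) : x ^ τ x ∈ powIdeal s τ :=
  Ideal.subset_span ⟨x, hx, rfl⟩

lemma powIdeal_le_iff {s : Finset B} {τ : B → ℕ} {I : Ideal B} :
    powIdeal s τ ≤ I ↔ ∀ x ∈ s, x ^ τ x ∈ I := by
  simp [powIdeal, Ideal.span_le, Set.subset_def]

lemma powIdeal_congr {s : Finset B} {τ σ : B → ℕ} (h : ∀ x ∈ s, τ x = σ x) :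
    powIdeal s τ = powIdeal s σ :=
  congrArg Ideal.span (Set.image_congr fun x hx => by rw [h x hx])

lemma powIdeal_insert [DecidableEq B] (s : Finset B) (τ : B → ℕ) (z : B) :
    powIdeal (insert z s) τ = powIdeal s τ ⊔ Ideal.span {z ^ τ z} := by
  rw [powIdeal, Finset.coe_insert, Set.image_insert_eq, Ideal.span_insert, sup_comm, powIdeal]

lemma IsRegularSet.isSMulRegular_quot_powIdeal_sup_span {S : Set B} (h : IsRegularSet M S)
    (τ : B → ℕ) (T : Finset B) (hT : ↑T ⊆ S) (U : Finset B) (hU : ↑U ⊆ S) (hTU : Disjoint T U)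
    {w : B} (hw : w ∈ S) (hwT : w ∉ T) (hwU : w ∉ U) :
    IsSMulRegular (M ⧸ ((powIdeal T τ ⊔ Ideal.span U) • ⊤ : Submodule B M)) w := by
  classical
  induction T using Finset.induction_on generalizing U w with
  | empty =>
    rw [powIdeal, Finset.coe_empty, Set.image_empty, Ideal.span_empty, bot_sup_eq]
    exact h U hU w hw hwU
  | insert z T hzT ih =>
    rw [Finset.coe_insert, Set.insert_subset_iff] at hT
    rw [Finset.disjoint_insert_left] at hTU
    rw [Finset.mem_insert, not_or] at hwT
    rw [powIdeal_insert, sup_right_comm]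
    refine isSMulRegular_quot_sup_span_pow (ih hT.2 U hU hTU.2 hT.1 hzT hTU.1) ?_ (τ z)
    have hw' := ih hT.2 (insert z U) (by simp [Set.insert_subset_iff, hT.1, hU])
      (Finset.disjoint_insert_right.mpr ⟨hzT, hTU.2⟩) hw hwT.2 (by simp [hwT.1, hwU])
    rwa [Finset.coe_insert, Ideal.span_insert, sup_comm (Ideal.span {z}), ← sup_assoc] at hw'

lemma IsRegularSet.isSMulRegular_quot_powIdeal {S : Set B} (h : IsRegularSet M S) (τ : B → ℕ)
    {T : Finset B} (hT : ↑T ⊆ S) {w : B} (hw : w ∈ S) (hwT : w ∉ T) :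
    IsSMulRegular (M ⧸ (powIdeal T τ • ⊤ : Submodule B M)) w := by
  have := h.isSMulRegular_quot_powIdeal_sup_span τ T hT ∅ (by simp) (by simp) hw hwT (by simp)
  rwa [Finset.coe_empty, Ideal.span_empty, sup_bot_eq] at this

end RegularSets

section FactorizationThroughFree

variable {B M N : Type*} [CommRing B] [AddCommGroup M] [Module B M] [AddCommGroup N] [Module B N]

/-- The linear map `f` factors through a finite free module, as every map from a finitely presented
module to a flat module does. -/
def FactorsThroughFinFree (f : M →ₗ[B] N) : Prop :=
  ∃ (k : ℕ) (φ : M →ₗ[B] (Fin k → B)) (ψ : (Fin k → B) →ₗ[B] N), ψ ∘ₗ φ = f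

variable (M) in
/-- The inclusion of every finitely generated submodule of `M` factors through a finite free module
after multiplication by a power of `a`. Over a Noetherian ring this is a uniform form of flatness of
`M` away from `a`. -/
def FactorsUpToPow (a : B) : Prop :=
  ∀ R : Submodule B M, R.FG → ∃ e : ℕ, FactorsThroughFinFree (a ^ e • R.subtype)

lemma apply_mem_smul_top_of_pow_smul_mem {F : Type*} [AddCommGroup F] [Module B F] [Module.Flat B F]
    {R : Submodule B M} (φ : R →ₗ[B] F) {J : Ideal B} {y : B}
    (hy : IsSMulRegular (B ⧸ (J • ⊤ : Submodule B B)) y) {b : ℕ} (v : R)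
    (hv : y ^ b • (v : M) ∈ J • R) : φ v ∈ (J • ⊤ : Submodule B F) := by
  have hyF := (isSMulRegular_quot_smul_top_of_flat (M := F) hy).pow b
  refine (isSMulRegular_quotient_iff_mem_of_smul_mem _ _).mp hyF _ ?_
  rw [← map_smul]
  refine Submodule.smul_top_le_comap_smul_top J φ ?_
  exact (Submodule.mem_smul_top_iff J R _).mpr hv

lemma apply_mem_smul_range (ψ : M →ₗ[B] N) {J : Ideal B} {m : M}
    (hm : m ∈ (J • ⊤ : Submodule B M)) : ψ m ∈ J • LinearMap.range ψ := by
  rw [LinearMap.range_eq_map, ← Submodule.map_smul'']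
  exact Submodule.mem_map_of_mem hm

/-- The class of `v / z ^ t` modulo `J` has, if it is killed by a power of `y`, a representative
`v' / z ^ ε` with `ε` independent of `t`. -/
lemma FactorsUpToPow.exists_fg_forall_sub_pow_smul_mem {y z : B} {R : Submodule B M}
    (hy : FactorsUpToPow M y) (hz : FactorsUpToPow M z) (hR : R.FG) (b : ℕ) :
    ∃ (ε b' : ℕ) (R' : Submodule B M), R'.FG ∧ ∀ (J : Ideal B) (t : ℕ), ε ≤ t →
      IsSMulRegular (B ⧸ ((J ⊔ Ideal.span {z ^ t}) • ⊤ : Submodule B B)) y →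
      IsSMulRegular (B ⧸ (J • ⊤ : Submodule B B)) z →
      IsSMulRegular (M ⧸ (J • ⊤ : Submodule B M)) z →
      ∀ v ∈ R, y ^ b • v ∈ (J ⊔ Ideal.span {z ^ t}) • R →
      ∃ v' ∈ R', y ^ b' • v' ∈ (J ⊔ Ideal.span {z ^ ε}) • R' ∧
        v - z ^ (t - ε) • v' ∈ (J • ⊤ : Submodule B M) := by
  obtain ⟨ε, k, φ, ψ, hψφ⟩ := hz R hR
  have hR₁ : (R ⊔ LinearMap.range ψ).FG := hR.sup (Module.Finite.iff_fg.mp (.range ψ))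
  obtain ⟨β, k', φ', ψ', hψφ'⟩ := hy _ hR₁
  refine ⟨ε, β + b, R ⊔ LinearMap.range ψ ⊔ LinearMap.range ψ',
    hR₁.sup (Module.Finite.iff_fg.mp (.range ψ')), fun J t ht hyB hzB hzM v hv hyv => ?_⟩
  obtain ⟨d, -, hd⟩ := mem_sup_span_singleton_smul.mp
    (apply_mem_smul_top_of_pow_smul_mem φ hyB ⟨v, hv⟩ hyv)
  obtain ⟨r, hr, hj⟩ := mem_sup_span_singleton_smul.mp hyv
  have hzv : z ^ ε • v - z ^ t • ψ d ∈ J • LinearMap.range ψ := by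
    simpa [show ψ (φ ⟨v, hv⟩) = z ^ ε • v from LinearMap.congr_fun hψφ _] using
      apply_mem_smul_range ψ hd
  set w := z ^ ε • r - y ^ b • ψ d with hw_def
  have hw : w ∈ R ⊔ LinearMap.range ψ := sub_mem
    (Submodule.smul_mem _ _ (Submodule.mem_sup_left hr))
    (Submodule.smul_mem _ _ (Submodule.mem_sup_right ⟨d, rfl⟩))
  have hzw : z ^ t • w ∈ J • (R ⊔ LinearMap.range ψ) := by
    convert sub_mem
      (Submodule.smul_mem _ (y ^ b) (Submodule.smul_mono le_rfl le_sup_right hzv))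
      (Submodule.smul_mem _ (z ^ ε) (Submodule.smul_mono le_rfl le_sup_left hj)) using 1
    rw [hw_def]
    module
  have hyw : y ^ β • w ∈ J • LinearMap.range ψ' := by
    rw [← show ψ' (φ' ⟨w, hw⟩) = y ^ β • w from LinearMap.congr_fun hψφ' _]
    exact apply_mem_smul_range ψ' (apply_mem_smul_top_of_pow_smul_mem φ' hzB ⟨w, hw⟩ hzw)
  refine ⟨ψ d, Submodule.mem_sup_left (Submodule.mem_sup_right ⟨d, rfl⟩), ?_, ?_⟩
  · refine mem_sup_span_singleton_smul.mpr ⟨y ^ β • r, Submodule.smul_mem _ _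
      (Submodule.mem_sup_left (Submodule.mem_sup_left hr)), ?_⟩
    convert neg_mem (Submodule.smul_mono le_rfl le_sup_right hyw) using 1
    rw [hw_def, pow_add]
    module
  · refine (isSMulRegular_quotient_iff_mem_of_smul_mem _ _).mp (hzM.pow ε) _ ?_
    rw [smul_sub, smul_smul, ← pow_add, Nat.add_sub_cancel' ht]
    exact Submodule.smul_mono le_rfl le_top hzv

end FactorizationThroughFree

section ReducedExponents

variable {B M : Type*} [CommRing B] [AddCommGroup M] [Module B M]

lemma smul_mem_of_mul_mem {I J : Ideal B} {c : B} (h : ∀ a ∈ I, c * a ∈ J) {m : M}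
    (hm : m ∈ (I • ⊤ : Submodule B M)) : c • m ∈ (J • ⊤ : Submodule B M) := by
  refine Submodule.smul_induction_on hm (fun a ha n _ => ?_) fun m m' hm hm' => ?_
  · rw [smul_smul]
    exact Submodule.smul_mem_smul (h a ha) trivial
  · rw [smul_add]
    exact add_mem hm hm'

variable [DecidableEq B]

lemma prod_pow_mul_mem_powIdeal {s s' : Finset B} {e : B → ℕ} {t : ℕ} (he : ∀ x ∈ s', e x ≤ t)
    {a : B} (ha : a ∈ powIdeal s (s'.piecewise e fun _ => t)) :
    (∏ x ∈ s', x ^ (t - e x)) * a ∈ powIdeal s fun _ => t := by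
  suffices h : powIdeal s (s'.piecewise e fun _ => t) ≤ Submodule.comap
      (LinearMap.mulLeft B (∏ x ∈ s', x ^ (t - e x))) (powIdeal s fun _ => t) from h ha
  refine powIdeal_le_iff.mpr fun x hx => ?_
  rw [Submodule.mem_comap, LinearMap.mulLeft_apply]
  refine Ideal.mem_of_dvd _ ?_ (pow_mem_powIdeal hx)
  by_cases hxs' : x ∈ s'
  · rw [s'.piecewise_eq_of_mem _ _ hxs', ← pow_sub_mul_pow x (he x hxs')]
    exact mul_dvd_mul_right (Finset.dvd_prod_of_mem _ hxs') _
  · rw [s'.piecewise_eq_of_notMem _ _ hxs']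
    exact dvd_mul_left _ _

/-- Think of `v ∈ R` as the numerator of a fraction `v / ∏ x ∈ s, x ^ t`, a class in the local
cohomology of `M` supported at `s`, which is killed by a power of `y`. Then for `t` large this
class has a representative in which the exponents of `x ∈ s'` are independent of `t`, and whose
numerator lies in a finitely generated module independent of `t`. -/
def HasReducedExponents (s : Finset B) (y : B) (R : Submodule B M) (s' : Finset B) : Prop :=
  ∃ (e : B → ℕ) (E b : ℕ) (R' : Submodule B M), R'.FG ∧ (∀ x ∈ s', e x ≤ E) ∧
    ∀ t, E ≤ t → ∀ v ∈ R, ∀ b₀ : ℕ, y ^ b₀ • v ∈ (powIdeal s fun _ => t) • R →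
      ∃ v' ∈ R', y ^ b • v' ∈ powIdeal s (s'.piecewise e fun _ => t) • R' ∧
        v - (∏ x ∈ s', x ^ (t - e x)) • v' ∈ ((powIdeal s fun _ => t) • ⊤ : Submodule B M)

variable {s : Finset B} {y : B} {R : Submodule B M}

lemma hasReducedExponents_empty (hys : y ∉ s) (hB : IsRegularSet B (insert y (s : Set B)))
    (hy : FactorsUpToPow M y) (hR : R.FG) : HasReducedExponents s y R ∅ := by
  obtain ⟨β, k, φ, ψ, hψφ⟩ := hy R hR
  refine ⟨0, 0, β, R ⊔ LinearMap.range ψ, hR.sup (Module.Finite.iff_fg.mp (.range ψ)), by simp,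
    fun t _ v hv b₀ hv₀ => ⟨v, Submodule.mem_sup_left hv, ?_, by simp⟩⟩
  have hyB := hB.isSMulRegular_quot_powIdeal (fun _ => t) (Set.subset_insert y _)
    (Set.mem_insert y _) hys
  rw [← show ψ (φ ⟨v, hv⟩) = y ^ β • v from LinearMap.congr_fun hψφ _, Finset.piecewise_empty]
  exact Submodule.smul_mono le_rfl le_sup_right
    (apply_mem_smul_range ψ (apply_mem_smul_top_of_pow_smul_mem φ hyB ⟨v, hv⟩ hv₀))

lemma powIdeal_eq_erase_sup {z : B} (hz : z ∈ s) {τ σ : B → ℕ} (h : ∀ x, x ≠ z → τ x = σ x) :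
    powIdeal s σ = powIdeal (s.erase z) τ ⊔ Ideal.span {z ^ σ z} := by
  rw [powIdeal_congr fun x hx => h x (Finset.ne_of_mem_erase hx), ← powIdeal_insert,
    Finset.insert_erase hz]

lemma HasReducedExponents.insert_mem (hys : y ∉ s) (hB : IsRegularSet B (insert y (s : Set B)))
    (hM : IsRegularSet M (s : Set B)) (hy : FactorsUpToPow M y) {z : B} (hzs : z ∈ s)
    (hz : FactorsUpToPow M z) {s' : Finset B} (hzs' : z ∉ s') (h : HasReducedExponents s y R s') :
    HasReducedExponents s y R (insert z s') := by
  obtain ⟨e, E, b, R', hR', heE, hred⟩ := h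
  obtain ⟨ε, b', R'', hR'', hexch⟩ := hy.exists_fg_forall_sub_pow_smul_mem hz hR' b
  have he_ne {x} (hx : x ∈ s') : Function.update e z ε x = e x :=
    Function.update_of_ne (by rintro rfl; exact hzs' hx) _ _
  refine ⟨Function.update e z ε, max E ε, b', R'', hR'', ?_, fun t ht v hv b₀ hv₀ => ?_⟩
  · rw [Finset.forall_mem_insert, Function.update_self]
    exact ⟨le_max_right _ _, fun x hx => he_ne hx ▸ (heE x hx).trans (le_max_left _ _)⟩
  obtain ⟨hEt, hεt⟩ := max_le_iff.mp ht
  obtain ⟨v', hv', hyv', hvv'⟩ := hred t hEt v hv b₀ hv₀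
  set τ := s'.piecewise e fun _ => t
  have hτz : τ z = t := s'.piecewise_eq_of_notMem _ _ hzs'
  have hτ := hτz ▸ powIdeal_eq_erase_sup hzs fun x (_ : x ≠ z) => rfl (a := τ x)
  have hsub : ((s.erase z : Finset B) : Set B) ⊆ s := Finset.coe_subset.mpr (s.erase_subset z)
  obtain ⟨v'', hv'', hyv'', hv'v''⟩ := hexch _ t hεt
    (hτ ▸ hB.isSMulRegular_quot_powIdeal τ (Set.subset_insert y _) (Set.mem_insert y _) hys)
    (hB.isSMulRegular_quot_powIdeal τ (hsub.trans (Set.subset_insert y _))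
      (Set.mem_insert_of_mem y hzs) (s.notMem_erase z))
    (hM.isSMulRegular_quot_powIdeal τ hsub hzs (s.notMem_erase z)) v' hv' (hτ ▸ hyv')
  refine ⟨v'', hv'', ?_, ?_⟩
  · rw [powIdeal_eq_erase_sup hzs (τ := τ)]
    · simpa using hyv''
    · intro x hxz
      by_cases hxs' : x ∈ s' <;> simp [τ, hxs', hxz]
  · have hprod : ∏ x ∈ insert z s', x ^ (t - Function.update e z ε x) =
        (∏ x ∈ s', x ^ (t - e x)) * z ^ (t - ε) := by
      rw [Finset.prod_insert hzs', mul_comm, Function.update_self]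
      exact congrArg (· * _) (Finset.prod_congr rfl fun x hx => by rw [he_ne hx])
    convert add_mem hvv' (smul_mem_of_mul_mem (fun a ha => prod_pow_mul_mem_powIdeal
      (fun x hx => (heE x hx).trans hEt)
      (hτ ▸ Ideal.mem_sup_left ha : a ∈ powIdeal s τ)) hv'v'') using 1
    rw [hprod]
    module

lemma hasReducedExponents_self (hys : y ∉ s) (hB : IsRegularSet B (insert y (s : Set B)))
    (hM : IsRegularSet M (s : Set B)) (hy : FactorsUpToPow M y)
    (hs : ∀ x ∈ s, FactorsUpToPow M x) (hR : R.FG) : HasReducedExponents s y R s := by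
  suffices h : ∀ s' ⊆ s, HasReducedExponents s y R s' from h s subset_rfl
  intro s'
  induction s' using Finset.induction_on with
  | empty => exact fun _ => hasReducedExponents_empty hys hB hy hR
  | insert z s' hzs' ih =>
    intro hs'
    rw [Finset.insert_subset_iff] at hs'
    exact (ih hs'.2).insert_mem hys hB hM hy hs'.1 (hs z hs'.1) hzs'

lemma HasReducedExponents.exists_uniform (h : HasReducedExponents s y R s) :
    ∃ (E : ℕ) (R' : Submodule B M), R'.FG ∧ ∀ t, E ≤ t → ∀ v ∈ R,
      y ^ t • v ∈ (powIdeal s fun _ => t) • R →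
      ∃ v' ∈ R', v - (∏ x ∈ s, x) ^ (t - E) • v' ∈
        ((powIdeal s fun _ => t) • ⊤ : Submodule B M) := by
  obtain ⟨e, E, b, R', hR', heE, hred⟩ := h
  refine ⟨E, R', hR', fun t ht v hv hyv => ?_⟩
  obtain ⟨v', hv', -, hvv'⟩ := hred t ht v hv t hyv
  refine ⟨(∏ x ∈ s, x ^ (E - e x)) • v', R'.smul_mem _ hv', ?_⟩
  rw [smul_smul, ← Finset.prod_pow, ← Finset.prod_mul_distrib]
  convert hvv' using 4 with x hx
  rw [← pow_add]
  have := heE x hx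
  congr 1
  omega

end ReducedExponents

section RegularityOfAbsoluteIntegralClosure

lemma exists_mem_span_image_Ico {B M : Type*} [CommRing B] [AddCommGroup M] [Module B M]
    [IsNoetherian B M] (v : ℕ → M) (m : ℕ) :
    ∃ n, m ≤ n ∧ v n ∈ Submodule.span B (v '' Set.Ico m n) := by
  have hmono : Monotone fun n => Submodule.span B (v '' Set.Ico m n) := fun _ _ h =>
    Submodule.span_mono (Set.image_mono (Set.Ico_subset_Ico_right h))
  obtain ⟨n, hn⟩ := monotone_stabilizes_iff_noetherian.mpr ‹_› ⟨_, hmono⟩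
  refine ⟨max m n, le_max_left _ _, ?_⟩
  have hstable : Submodule.span B (v '' Set.Ico m (max m n)) =
      Submodule.span B (v '' Set.Ico m (max m n + 1)) :=
    (hn _ (le_max_right m n)).symm.trans (hn _ ((le_max_right m n).trans (Nat.le_succ _)))
  rw [hstable]
  exact Submodule.subset_span ⟨max m n, ⟨le_max_left _ _, Nat.lt_succ_self _⟩, rfl⟩

variable {B C : Type*} [CommRing B] [CommRing C] [Algebra B C]

lemma mem_smul_top_iff_mem_span {S : Set B} {u : C} :
    u ∈ (Ideal.span S • ⊤ : Submodule B C) ↔ u ∈ Ideal.span (algebraMap B C '' S) := by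
  rw [Ideal.smul_top_eq_map, Submodule.restrictScalars_mem, Ideal.map_span]

lemma mem_powIdeal_smul_top_iff {s : Finset B} {τ : B → ℕ} {u : C} :
    u ∈ (powIdeal s τ • ⊤ : Submodule B C) ↔
      u ∈ Ideal.span ((fun x => algebraMap B C x ^ τ x) '' s) := by
  simp only [powIdeal, mem_smul_top_iff_mem_span, Set.image_image, map_pow]

/-- Frobenius turns a relation `y u = ∑ c_x x` into `y^q u^q = ∑ c_x^q x^q`, all of whose
coefficients lie in the finite algebra generated by `u` and the `c_x`. -/
lemma exists_fg_frobenius_relation [Algebra.IsIntegral B C] (p : ℕ) [Fact p.Prime] [CharP C p]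
    {s : Finset B} {y : B} {u : C} (hu : y • u ∈ (Ideal.span (s : Set B) • ⊤ : Submodule B C)) :
    ∃ R : Submodule B C, R.FG ∧ ∀ n, u ^ p ^ n ∈ R ∧
      y ^ p ^ n • u ^ p ^ n ∈ (powIdeal s fun _ => p ^ n) • R := by
  classical
  rw [mem_smul_top_iff_mem_span] at hu
  obtain ⟨c, hc⟩ := (Submodule.mem_span_image_finset_iff_exists_fun C).mp hu
  let R := Algebra.adjoin B (insert u (Set.range c))
  have hcR (x) : c x ∈ R := Algebra.subset_adjoin (Set.mem_insert_of_mem _ ⟨x, rfl⟩)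
  refine ⟨Subalgebra.toSubmodule R, fg_adjoin_of_finite ((Set.finite_range c).insert u)
    fun z _ => Algebra.IsIntegral.isIntegral z, fun n => ⟨pow_mem
      (Algebra.subset_adjoin (Set.mem_insert u _)) _, ?_⟩⟩
  have hfrob : y ^ p ^ n • u ^ p ^ n = ∑ x : s, (x : B) ^ p ^ n • c x ^ p ^ n := by
    rw [← smul_pow, ← hc, sum_pow_char_pow]
    refine Finset.sum_congr rfl fun x _ => ?_
    rw [smul_eq_mul, mul_comm, ← Algebra.smul_def, smul_pow]
  rw [hfrob]
  exact sum_mem fun x _ => Submodule.smul_mem_smul (pow_mem_powIdeal x.2) (pow_mem (hcR x) _)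

lemma prod_pow_mul_mem_powIdeal_const {s : Finset B} {t T : ℕ} (h : t ≤ T) {a : B}
    (ha : a ∈ powIdeal s fun _ => t) : (∏ x ∈ s, x) ^ (T - t) * a ∈ powIdeal s fun _ => T := by
  classical
  rw [← Finset.prod_pow]
  refine prod_pow_mul_mem_powIdeal (e := fun _ => t) (fun _ _ => h) ?_
  rwa [powIdeal_congr fun x hx => s.piecewise_eq_of_mem _ _ hx]

/-- The tail of a bounded-denominator approximation of the Frobenius powers `u ^ p ^ n` satisfies a
linear relation over a Noetherian ring, which is an additive relation for `u` modulo
`(x ^ p ^ N)`. -/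
lemma exists_additive_relation [IsNoetherianRing B] (p : ℕ) [Fact p.Prime] {s : Finset B} {u : C}
    {E : ℕ} {R : Submodule B C} (hR : R.FG)
    (h : ∀ n, E ≤ p ^ n → ∃ v ∈ R, u ^ p ^ n - (∏ x ∈ s, x) ^ (p ^ n - E) • v ∈
      ((powIdeal s fun _ => p ^ n) • ⊤ : Submodule B C)) :
    ∃ (m N : ℕ) (b : ℕ → B), (additivePoly p m N fun j => algebraMap B C (b j) *
        (∏ x ∈ s, algebraMap B C x) ^ (p ^ N - p ^ j)).eval u ∈
      ((powIdeal s fun _ => p ^ N) • ⊤ : Submodule B C) := by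
  have hp := (Fact.out : p.Prime)
  have hE {n} (hn : E ≤ n) : E ≤ p ^ n := hn.trans (Nat.lt_pow_self hp.one_lt).le
  have := isNoetherian_of_fg_of_noetherian R hR
  have h' (n) (hn : E ≤ n) : ∃ v : R, u ^ p ^ n - (∏ x ∈ s, x) ^ (p ^ n - E) • (v : C) ∈
      ((powIdeal s fun _ => p ^ n) • ⊤ : Submodule B C) := by
    simpa using h n (hE hn)
  choose! v hv using h'
  obtain ⟨N, hEN, hN⟩ := exists_mem_span_image_Ico (B := B) v E
  rw [← Finset.coe_Ico, Submodule.mem_span_image_finset_iff_exists_fun'] at hN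
  obtain ⟨b, hb⟩ := hN
  refine ⟨E, N, b, ?_⟩
  set π := ∏ x ∈ s, x
  have hjN {j} (hj : j ∈ Finset.Ico E N) : p ^ j ≤ p ^ N :=
    Nat.pow_le_pow_right hp.pos (Finset.mem_Ico.mp hj).2.le
  have hterm (j) (hj : j ∈ Finset.Ico E N) :
      π ^ (p ^ N - p ^ j) • (u ^ p ^ j - π ^ (p ^ j - E) • (v j : C)) ∈
        ((powIdeal s fun _ => p ^ N) • ⊤ : Submodule B C) :=
    smul_mem_of_mul_mem (fun a ha => prod_pow_mul_mem_powIdeal_const (hjN hj) ha)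
      (hv j (Finset.mem_Ico.mp hj).1)
  have hsum : π ^ (p ^ N - E) • (v N : C) =
      ∑ j ∈ Finset.Ico E N, b j • π ^ (p ^ N - p ^ j) • π ^ (p ^ j - E) • (v j : C) := by
    rw [← hb, Submodule.coe_sum, Finset.smul_sum]
    refine Finset.sum_congr rfl fun j hj => ?_
    rw [smul_smul (π ^ _), ← pow_add, tsub_add_tsub_cancel (hjN hj) (hE (Finset.mem_Ico.mp hj).1),
      Submodule.coe_smul, smul_comm]
  convert sub_mem (hv N hEN) (sum_mem fun j hj => Submodule.smul_mem _ (b j) (hterm j hj)) using 1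
  rw [hsum, sub_sub, ← Finset.sum_add_distrib]
  simp only [eval_additivePoly, Algebra.smul_def, map_pow, map_prod, π, mul_assoc, mul_sub,
    add_sub_cancel]

variable [IsNoetherianRing B] [IsDomain C] [Algebra.IsIntegral B C]

lemma IsRegularSet.isSMulRegular_quot_of_isAbsIntegrallyClosed (p : ℕ) [Fact p.Prime]
    [CharP C p] (hC : IsAbsIntegrallyClosed C) {s : Finset B} (hs : s.Nonempty)
    (hs0 : ∀ x ∈ s, algebraMap B C x ≠ 0) {y : B} (hys : y ∉ s)
    (hB : IsRegularSet B (insert y (s : Set B))) (hCs : IsRegularSet C (s : Set B))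
    (hy : FactorsUpToPow C y) (hfac : ∀ x ∈ s, FactorsUpToPow C x) :
    IsSMulRegular (C ⧸ (Ideal.span (s : Set B) • ⊤ : Submodule B C)) y := by
  classical
  refine (isSMulRegular_quotient_iff_mem_of_smul_mem _ _).mpr fun u hu => ?_
  obtain ⟨R, hR, hfrob⟩ := exists_fg_frobenius_relation p hu
  obtain ⟨E, R', hR', happrox⟩ := (hasReducedExponents_self hys hB hCs hy hfac hR).exists_uniform
  obtain ⟨m, N, b, hb⟩ := exists_additive_relation p hR' fun n hn =>
    happrox (p ^ n) hn _ (hfrob n).1 (hfrob n).2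
  rw [mem_powIdeal_smul_top_iff] at hb
  exact mem_smul_top_iff_mem_span.mpr (hC.mem_span_of_additive_relation _ hs _ hs0 hb)

theorem IsRegularSet.of_isAbsIntegrallyClosed [FaithfulSMul B C] (p : ℕ) [Fact p.Prime] [CharP C p]
    (hC : IsAbsIntegrallyClosed C) {S : Set B} (hB : IsRegularSet B S)
    (hS : ∀ x ∈ S, x ≠ 0 ∧ FactorsUpToPow C x) : IsRegularSet C S := by
  intro T
  induction T using Finset.strongInduction with | H T ih
  intro hTS y hyS hyT
  have hne {x} (hx : x ∈ S) : algebraMap B C x ≠ 0 := by simpa using (hS x hx).1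
  rcases T.eq_empty_or_nonempty with rfl | hT
  · refine (isSMulRegular_quotient_iff_mem_of_smul_mem _ _).mpr fun u hu => ?_
    rw [Finset.coe_empty, Ideal.span_empty, Submodule.bot_smul, Submodule.mem_bot] at hu ⊢
    rw [Algebra.smul_def] at hu
    exact (mul_eq_zero.mp hu).resolve_left (hne hyS)
  · have hCT : IsRegularSet C (T : Set B) := fun U hUT z hzT hzU =>
      ih U ⟨hUT, fun h => hzU (h hzT)⟩ (hUT.trans hTS) z (hTS hzT) hzU
    exact isSMulRegular_quot_of_isAbsIntegrallyClosed p hC hT (fun x hx => hne (hTS hx)) hyT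
      (hB.mono (Set.insert_subset hyS hTS)) hCT (hS y hyS).2 fun x hx => (hS x (hTS hx)).2

end RegularityOfAbsoluteIntegralClosure

section FlatDimension

open Function LinearMap

section Snake

variable {A Z G N K L M : Type*} [CommRing A] [AddCommGroup Z] [AddCommGroup G] [AddCommGroup N]
  [AddCommGroup K] [AddCommGroup L] [AddCommGroup M] [Module A Z] [Module A G] [Module A N]
  [Module A K] [Module A L] [Module A M]
  {i : Z →ₗ[A] G} {π : G →ₗ[A] N} {j : K →ₗ[A] L} {ρ : L →ₗ[A] M}

lemma lTensor_injective_of_rTensor_injective (hiπ : Exact i π) (hπ : Surjective π)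
    (hjρ : Exact j ρ) (hρ : Surjective ρ) (hGj : Injective (j.lTensor G))
    (hiM : Injective (i.rTensor M)) : Injective (j.lTensor N) := by
  refine (injective_iff_map_eq_zero _).mpr fun ξ hξ => ?_
  obtain ⟨η, rfl⟩ := rTensor_surjective K hπ ξ
  obtain ⟨ζ, hζ⟩ : ∃ ζ, i.rTensor L ζ = j.lTensor G η := (rTensor_exact L hiπ hπ _).mp <| by
    rw [← hξ, ← LinearMap.comp_apply, ← LinearMap.comp_apply, rTensor_comp_lTensor,
      lTensor_comp_rTensor]
  have hρζ : i.rTensor M (ρ.lTensor Z ζ) = 0 := by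
    rw [← LinearMap.comp_apply, rTensor_comp_lTensor, ← lTensor_comp_rTensor,
      LinearMap.comp_apply, hζ]
    exact (lTensor_exact G hjρ hρ _).mpr ⟨η, rfl⟩
  obtain ⟨θ, rfl⟩ := (lTensor_exact Z hjρ hρ _).mp ((injective_iff_map_eq_zero _).mp hiM _ hρζ)
  refine (rTensor_exact K hiπ hπ _).mpr ⟨θ, hGj ?_⟩
  rw [← hζ, ← LinearMap.comp_apply, ← LinearMap.comp_apply, rTensor_comp_lTensor,
    lTensor_comp_rTensor]

/-- Both conditions say that `Tor₁(N, M) = 0`. -/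
lemma lTensor_injective_iff_rTensor_injective [Module.Flat A G] [Module.Flat A L]
    (hi : Injective i) (hiπ : Exact i π) (hπ : Surjective π) (hj : Injective j) (hjρ : Exact j ρ)
    (hρ : Surjective ρ) : Injective (j.lTensor N) ↔ Injective (i.rTensor M) := by
  refine ⟨fun h => ?_, lTensor_injective_of_rTensor_injective hiπ hπ hjρ hρ
    (Module.Flat.lTensor_preserves_injective_linearMap j hj)⟩
  rw [← lTensor_inj_iff_rTensor_inj]
  exact lTensor_injective_of_rTensor_injective hjρ hρ hiπ hπ
    (Module.Flat.lTensor_preserves_injective_linearMap i hi) ((lTensor_inj_iff_rTensor_inj ..).mp h)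

/-- Both conditions of `lTensor_injective_iff_rTensor_injective` for the pairs `(Z, L / K)` and
`(N, K)` say that `Tor₂(N, L / K) = 0`. -/
lemma rTensor_injective_of_lTensor_injective [Module.Flat A L] (hi : Injective i)
    (h : Injective (j.lTensor Z)) : Injective (i.rTensor K) := by
  have hcomp : Injective (i.rTensor L ∘ₗ j.lTensor Z) :=
    (Module.Flat.rTensor_preserves_injective_linearMap i hi).comp h
  rw [rTensor_comp_lTensor, ← lTensor_comp_rTensor] at hcomp
  exact Injective.of_comp hcomp

end Snake

variable {A : Type u} [CommRing A]

variable (A) in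
/-- The kernel of the canonical surjection onto `M` from the free module on the elements of `M`,
the first step of a functorial free resolution. -/
noncomputable abbrev firstSyzygy (M : Type*) [AddCommGroup M] [Module A M] : Submodule A (M →₀ A) :=
  ker (Finsupp.linearCombination A (id : M → M))

variable (A) in
/-- `TorVanishes A N n M` says that `Tor_{n+1}(N, M) = 0`, computed by the canonical free resolution
of `M`. -/
def TorVanishes (N : Type*) [AddCommGroup N] [Module A N] :
    ℕ → ∀ (M : Type u) [AddCommGroup M] [Module A M], Prop
  | 0, M, _, _ => Injective ((firstSyzygy A M).subtype.lTensor N)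
  | n + 1, M, _, _ => TorVanishes N n (firstSyzygy A M)

variable (A) in
/-- The flat dimension of `M` is at most `n`: there is a flat resolution of length at most `n`,
given by its first term and a resolution of the kernel. -/
def HasFlatDimLE : ℕ → ∀ (M : Type u) [AddCommGroup M] [Module A M], Prop
  | 0, M, _, _ => Module.Flat A M
  | n + 1, M, _, _ => ∃ (F : Type u) (_ : AddCommGroup F) (_ : Module A F) (g : F →ₗ[A] M),
      Module.Flat A F ∧ Surjective g ∧ HasFlatDimLE n (ker g)

lemma torVanishes_zero_iff {Z G N : Type*} [AddCommGroup Z] [AddCommGroup G] [AddCommGroup N]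
    [Module A Z] [Module A G] [Module A N] [Module.Flat A G] {i : Z →ₗ[A] G} {π : G →ₗ[A] N}
    (hi : Injective i) (hiπ : Exact i π) (hπ : Surjective π)
    {M : Type u} [AddCommGroup M] [Module A M] :
    TorVanishes A N 0 M ↔ Injective (i.rTensor M) :=
  lTensor_injective_iff_rTensor_injective hi hiπ hπ (Submodule.subtype_injective _)
    (exact_subtype_ker_map _) (Finsupp.linearCombination_id_surjective A M)

lemma TorVanishes.succ_of_exact {Z G N : Type*} [AddCommGroup Z] [AddCommGroup G] [AddCommGroup N]
    [Module A Z] [Module A G] [Module A N] [Module.Flat A G] {i : Z →ₗ[A] G} {π : G →ₗ[A] N}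
    (hi : Injective i) (hiπ : Exact i π) (hπ : Surjective π) {n : ℕ} {M : Type u} [AddCommGroup M]
    [Module A M] (h : TorVanishes A Z n M) : TorVanishes A N (n + 1) M := by
  induction n generalizing M with
  | zero =>
    have hZ : Injective ((firstSyzygy A M).subtype.lTensor Z) := h
    have hsyz : Injective (i.rTensor (firstSyzygy A M)) :=
      rTensor_injective_of_lTensor_injective (K := firstSyzygy A M) hi hZ
    exact (torVanishes_zero_iff hi hiπ hπ).mpr hsyz
  | succ n ih => exact ih h

lemma HasFlatDimLE.torVanishes {n : ℕ} {N : Type u} [AddCommGroup N] [Module A N]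
    (h : HasFlatDimLE A n N) (M : Type u) [AddCommGroup M] [Module A M] :
    TorVanishes A N n M := by
  induction n generalizing N with
  | zero =>
    have : Module.Flat A N := h
    exact Module.Flat.lTensor_preserves_injective_linearMap _ (Submodule.subtype_injective _)
  | succ n ih =>
    obtain ⟨F, _, _, g, hF, hg, hker⟩ := h
    exact (ih hker).succ_of_exact (Submodule.subtype_injective _) (exact_subtype_ker_map g) hg

lemma flat_of_forall_lTensor_quotient_injective {K L M : Type*} [AddCommGroup K] [AddCommGroup L]
    [AddCommGroup M] [Module A K] [Module A L] [Module A M] [Module.Flat A L] {j : K →ₗ[A] L}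
    {ρ : L →ₗ[A] M} (hj : Injective j) (hjρ : Exact j ρ) (hρ : Surjective ρ)
    (h : ∀ I : Ideal A, Injective (j.lTensor (A ⧸ I))) : Module.Flat A M :=
  Module.Flat.iff_rTensor_injective'.mpr fun I =>
    (lTensor_injective_iff_rTensor_injective (Submodule.subtype_injective I)
      (exact_subtype_mkQ I) (Submodule.mkQ_surjective I) hj hjρ hρ).mp (h I)

lemma hasFlatDimLE_of_torVanishes {n : ℕ} {M : Type u} [AddCommGroup M] [Module A M]
    (h : ∀ I : Ideal A, TorVanishes A (A ⧸ I) n M) : HasFlatDimLE A n M := by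
  induction n generalizing M with
  | zero =>
    exact flat_of_forall_lTensor_quotient_injective (Submodule.subtype_injective _)
      (exact_subtype_ker_map _) (Finsupp.linearCombination_id_surjective A M) h
  | succ n ih =>
    exact ⟨M →₀ A, inferInstance, inferInstance, Finsupp.linearCombination A id, inferInstance,
      Finsupp.linearCombination_id_surjective A M, ih h⟩

theorem hasFlatDimLE_of_forall_quotient {n : ℕ} (h : ∀ I : Ideal A, HasFlatDimLE A n (A ⧸ I))
    (M : Type u) [AddCommGroup M] [Module A M] : HasFlatDimLE A n M :=
  hasFlatDimLE_of_torVanishes fun I => (h I).torVanishes M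

theorem HasFlatDimLE.of_isLocalizedModule {n : ℕ} (S : Submonoid A) (B : Type u) [CommRing B]
    [Algebra A B] [IsLocalization S B] {M M' : Type u} [AddCommGroup M] [Module A M]
    [AddCommGroup M'] [Module A M'] [Module B M'] [IsScalarTower A B M'] (f : M →ₗ[A] M')
    [IsLocalizedModule S f] (h : HasFlatDimLE A n M) : HasFlatDimLE B n M' := by
  induction n generalizing M M' with
  | zero =>
    have : Module.Flat A M := h
    exact Module.Flat.of_isLocalizedModule B S f
  | succ n ih =>
    obtain ⟨F, _, _, g, hF, hg, hker⟩ := h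
    let ι := TensorProduct.mk A B F 1
    let g' := (IsLocalizedModule.map S ι f g).extendScalarsOfIsLocalization S B
    refine ⟨B ⊗[A] F, inferInstance, inferInstance, g', inferInstance,
      IsLocalizedModule.map_surjective S ι f g hg, ?_⟩
    have hker' : ker g' = Submodule.localized' B S ι (ker g) :=
      (localized'_ker_eq_ker_localizedMap B S ι f g).symm
    rw [hker']
    have : IsScalarTower A B (Submodule.localized' B S ι (ker g)) :=
      ⟨fun a b x => Subtype.ext (smul_assoc a b (x : B ⊗[A] F))⟩
    exact ih (Submodule.toLocalized' B S ι (ker g)) hker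

end FlatDimension

section FlatnessCriterion

open Function LinearMap

section RTensorInjective

variable {B K F M : Type*} [CommRing B] [AddCommGroup K] [AddCommGroup F] [AddCommGroup M]
  [Module B K] [Module B F] [Module B M] {j : K →ₗ[B] F} {g : F →ₗ[B] M}

lemma rTensor_injective_of_exact [Module.Flat B F] {N₁ N₂ N₃ : Type*} [AddCommGroup N₁]
    [AddCommGroup N₂] [AddCommGroup N₃] [Module B N₁] [Module B N₂] [Module B N₃]
    {i : N₁ →ₗ[B] N₂} {π : N₂ →ₗ[B] N₃} (hi : Injective i) (hiπ : Exact i π) (hπ : Surjective π)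
    (h₁ : Injective (j.rTensor N₁)) (h₃ : Injective (j.rTensor N₃)) : Injective (j.rTensor N₂) := by
  refine (injective_iff_map_eq_zero _).mpr fun w hw => ?_
  have hπw : π.lTensor K w = 0 := (injective_iff_map_eq_zero _).mp h₃ _ <| by
    rw [← LinearMap.comp_apply, rTensor_comp_lTensor, ← lTensor_comp_rTensor, LinearMap.comp_apply,
      hw, map_zero]
  obtain ⟨v, rfl⟩ := (lTensor_exact K hiπ hπ w).mp hπw
  have hiF : Injective (i.lTensor F) := Module.Flat.lTensor_preserves_injective_linearMap i hi
  have hv : j.rTensor N₁ v = 0 := (injective_iff_map_eq_zero _).mp hiF _ <| by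
    rw [← LinearMap.comp_apply, lTensor_comp_rTensor, ← rTensor_comp_lTensor,
      LinearMap.comp_apply, hw]
  rw [(injective_iff_map_eq_zero _).mp h₁ v hv, map_zero]

lemma rTensor_injective_of_injective [Module.Flat B K] {N₁ N₂ : Type*} [AddCommGroup N₁]
    [AddCommGroup N₂] [Module B N₁] [Module B N₂] {i : N₁ →ₗ[B] N₂} (hi : Injective i)
    (h₂ : Injective (j.rTensor N₂)) : Injective (j.rTensor N₁) := by
  have hcomp : Injective (j.rTensor N₂ ∘ₗ i.lTensor K) :=
    h₂.comp (Module.Flat.lTensor_preserves_injective_linearMap i hi)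
  rw [rTensor_comp_lTensor, ← lTensor_comp_rTensor] at hcomp
  exact Injective.of_comp hcomp

lemma rTensor_quotient_injective_of_inf_le {K : Submodule B F} {J : Ideal B}
    (h : K ⊓ J • ⊤ ≤ J • K) : Injective (K.subtype.rTensor (B ⧸ J)) := by
  refine (injective_iff_map_eq_zero _).mpr fun w hw => ?_
  obtain ⟨w, rfl⟩ := (tensorQuotEquivQuotSMul K J).symm.surjective w
  obtain ⟨k, rfl⟩ := Submodule.Quotient.mk_surjective _ w
  have hk : (k : F) ∈ (J • ⊤ : Submodule B F) := by
    rwa [tensorQuotEquivQuotSMul_symm_mk, rTensor_tmul, ← tensorQuotEquivQuotSMul_symm_mk,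
      LinearEquiv.map_eq_zero_iff, Submodule.Quotient.mk_eq_zero] at hw
  have hkJ : k ∈ (J • ⊤ : Submodule B K) := (Submodule.mem_smul_top_iff J K k).mpr (h ⟨k.2, hk⟩)
  rw [(Submodule.Quotient.mk_eq_zero _).mpr hkJ, map_zero]

variable (hj : Injective j) (hjg : Exact j g) (hg : Surjective g)
include hj hjg hg

lemma flat_of_exact [Module.Flat B F] [Module.Flat B M] : Module.Flat B K :=
  Module.Flat.iff_rTensor_injective'.mpr fun I =>
    rTensor_injective_of_lTensor_injective (Submodule.subtype_injective I)
      (lTensor_injective_of_exact_of_flat g hg j hj hjg I)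

lemma flat_localizedModule_of_exact [Module.Flat B F] (S : Submonoid B)
    [Module.Flat B (LocalizedModule S M)] : Module.Flat B (LocalizedModule S K) := by
  have : Module.Flat (Localization S) (LocalizedModule S F) := Module.Flat.localizedModule S
  have : Module.Flat B (LocalizedModule S F) := Module.Flat.trans B (Localization S) _
  exact flat_of_exact
    (IsLocalizedModule.map_injective S (LocalizedModule.mkLinearMap S K)
      (LocalizedModule.mkLinearMap S F) j hj)
    (IsLocalizedModule.map_exact S _ _ (LocalizedModule.mkLinearMap S M) j g hjg)
    (IsLocalizedModule.map_surjective S _ _ g hg)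

lemma rTensor_quotient_injective_of_flat_localizedModule [Module.Flat B K] (Q : Ideal B) [Q.IsPrime]
    [Module.Flat B (LocalizedModule Q.primeCompl M)] : Injective (j.rTensor (B ⧸ Q)) := by
  refine (injective_iff_map_eq_zero _).mpr fun w hw => ?_
  let S := Q.primeCompl
  let ι := LocalizedModule.mkLinearMap S K
  let jS := IsLocalizedModule.map S ι (LocalizedModule.mkLinearMap S F) j
  have hjS : Injective (jS.rTensor (B ⧸ Q)) := (lTensor_inj_iff_rTensor_inj ..).mp <|
    lTensor_injective_of_exact_of_flat
      (IsLocalizedModule.map S _ (LocalizedModule.mkLinearMap S M) g)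
      (IsLocalizedModule.map_surjective S _ _ g hg) jS
      (IsLocalizedModule.map_injective S _ _ j hj) (IsLocalizedModule.map_exact S _ _ _ j g hjg) _
  have hcomm : jS ∘ₗ ι = LocalizedModule.mkLinearMap S F ∘ₗ j := IsLocalizedModule.map_comp S _ _ j
  have hιw : ι.rTensor (B ⧸ Q) w = 0 := (injective_iff_map_eq_zero _).mp hjS _ <| by
    rw [← rTensor_comp_apply, hcomm, rTensor_comp_apply, hw, map_zero]
  have : IsLocalizedModule S (ι.rTensor (B ⧸ Q)) :=
    IsLocalizedModule.rTensor (R := B) (A := B) Q.primeCompl ι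
  obtain ⟨s, hs⟩ := (IsLocalizedModule.eq_zero_iff S (ι.rTensor (B ⧸ Q))).mp hιw
  have hsQ : IsSMulRegular (B ⧸ Q) (s : B) := by
    rw [isSMulRegular_quotient_iff_mem_of_smul_mem]
    exact fun x hx => (Ideal.IsPrime.mem_or_mem ‹_› hx).resolve_left s.2
  exact (hsQ.lTensor K).right_eq_zero_of_smul hs

end RTensorInjective

namespace IsRegularSet

variable {B F M : Type*} [CommRing B] [AddCommGroup F] [AddCommGroup M] [Module B F] [Module B M]
  {g : F →ₗ[B] M} {S : Set B}

lemma ker_inf_smul_top_le (hM : IsRegularSet M S) (hg : Surjective g) {T : Finset B} (hT : ↑T ⊆ S) :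
    ker g ⊓ Ideal.span (T : Set B) • ⊤ ≤ Ideal.span (T : Set B) • ker g := by
  classical
  induction T using Finset.induction_on with
  | empty => simp
  | insert w T hw ih =>
    simp only [Finset.coe_insert, Set.insert_subset_iff] at hT
    rw [Finset.coe_insert, Ideal.span_insert, sup_comm]
    intro f hf
    set J := Ideal.span (T : Set B)
    obtain ⟨n, -, hn⟩ := mem_sup_span_singleton_smul.mp hf.2
    have map_mem {y : F} (hy : y ∈ (J • ⊤ : Submodule B F)) : g y ∈ (J • ⊤ : Submodule B M) :=
      Submodule.smul_top_le_comap_smul_top J g hy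
    have hgn : g n ∈ (J • ⊤ : Submodule B M) := by
      refine (isSMulRegular_quotient_iff_mem_of_smul_mem _ _).mp (hM T hT.2 w hT.1 hw) _ ?_
      simpa [mem_ker.mp hf.1] using neg_mem (map_mem hn)
    obtain ⟨n', hn', hgn'⟩ : ∃ n' ∈ (J • ⊤ : Submodule B F), g n' = g n := by
      rwa [← range_eq_top.mpr hg, range_eq_map, ← Submodule.map_smul''] at hgn
    have hker : n - n' ∈ ker g := by rw [mem_ker, map_sub, hgn', sub_self]
    refine mem_sup_span_singleton_smul.mpr ⟨n - n', hker, ih hT.2 ⟨?_, ?_⟩⟩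
    · exact sub_mem hf.1 (Submodule.smul_mem _ _ hker)
    · rw [smul_sub, ← sub_add]
      exact add_mem hn (Submodule.smul_mem _ _ hn')

lemma ker [Module.Flat B F] (hB : IsRegularSet B S) (hM : ∀ w ∈ S, IsRegularSet M (S \ {w}))
    (hg : Surjective g) : IsRegularSet (ker g) S := by
  intro T hT w hw hwT
  have hF := hB.of_flat (M := F) T hT w hw hwT
  rw [isSMulRegular_quotient_iff_mem_of_smul_mem] at hF ⊢
  intro k hk
  rw [Submodule.mem_smul_top_iff] at hk ⊢
  exact (hM w hw).ker_inf_smul_top_le hg (Set.subset_sdiff_singleton hT hwT)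
    ⟨k.2, hF k (Submodule.smul_mono le_rfl le_top hk)⟩

end IsRegularSet

variable {B : Type u} [CommRing B] [IsNoetherianRing B] [IsLocalRing B]

lemma rTensor_injective_of_finite {K F M : Type*} [AddCommGroup K] [AddCommGroup F] [AddCommGroup M]
    [Module B K] [Module B F] [Module B M] {j : K →ₗ[B] F} {g : F →ₗ[B] M} (hj : Injective j)
    (hjg : Exact j g) (hg : Surjective g) [Module.Flat B K] [Module.Flat B F]
    (hm : Injective (j.rTensor (B ⧸ maximalIdeal B)))
    (hM : ∀ Q : Ideal B, [Q.IsPrime] → Q ≠ maximalIdeal B →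
      Module.Flat B (LocalizedModule Q.primeCompl M))
    (N : Type u) [AddCommGroup N] [Module B N] [hN : Module.Finite B N] :
    Injective (j.rTensor N) := by
  induction hN using IsNoetherianRing.induction_on_isQuotientEquivQuotientPrime B with
  | subsingleton N => exact injective_of_subsingleton _
  | exact N₁ N₂ N₃ i π hi hπ hiπ h₁ h₃ => exact rTensor_injective_of_exact hi hiπ hπ h₁ h₃
  | quotient N Q e =>
    refine rTensor_injective_of_injective e.injective ?_
    obtain hQ | hQ := eq_or_ne Q.1 (maximalIdeal B)
    · exact hQ ▸ hm
    · have := hM Q.1 hQ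
      exact rTensor_quotient_injective_of_flat_localizedModule hj hjg hg Q.1

theorem flat_of_hasFlatDimLE {S : Finset B} (hB : IsRegularSet B (S : Set B))
    (hS : maximalIdeal B ∈ associatedPrimes B (B ⧸ Ideal.span (S : Set B))) {n : ℕ} {M : Type u}
    [AddCommGroup M] [Module B M] (hn : HasFlatDimLE B n M) (hM : IsRegularSet M (S : Set B))
    (hloc : ∀ Q : Ideal B, [Q.IsPrime] → Q ≠ maximalIdeal B →
      Module.Flat B (LocalizedModule Q.primeCompl M)) : Module.Flat B M := by
  induction n generalizing M with
  | zero => exact hn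
  | succ n ih =>
    obtain ⟨F, _, _, g, _, hg, hn⟩ := hn
    have hexact := exact_subtype_ker_map g
    have hinj := Submodule.subtype_injective (ker g)
    have hker : Module.Flat B (ker g) := by
      refine ih hn (hB.ker (fun w _ => hM.mono Set.sdiff_subset) hg) fun Q _ hQ => ?_
      have := hloc Q hQ
      exact flat_localizedModule_of_exact hinj hexact hg Q.primeCompl
    obtain ⟨-, f, hf⟩ := (isAssociatedPrime_iff_exists_injective_linearMap ..).mp hS
    have hm : Injective ((ker g).subtype.rTensor (B ⧸ maximalIdeal B)) :=
      rTensor_injective_of_injective hf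
        (rTensor_quotient_injective_of_inf_le (hM.ker_inf_smul_top_le hg subset_rfl))
    exact flat_of_forall_lTensor_quotient_injective hinj hexact hg fun I =>
      (lTensor_inj_iff_rTensor_inj ..).mpr
        (rTensor_injective_of_finite hinj hexact hg hm hloc (B ⧸ I))

end FlatnessCriterion

section MaximalRegularSet

open RingTheory.Sequence

variable {B : Type*} [CommRing B] [IsNoetherianRing B] [IsLocalRing B]

lemma isRegularSet_of_isWeaklyRegular {M : Type*} [AddCommGroup M] [Module B M] [Module.Finite B M]
    {rs : List B} (h : IsWeaklyRegular M rs) (hrs : ∀ r ∈ rs, r ∈ maximalIdeal B) :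
    IsRegularSet M {r | r ∈ rs} := by
  classical
  intro T hT z hz hzT
  have hsub : (T.toList ++ [z]).Subperm rs := by
    refine List.subperm_of_subset (List.nodup_append'.mpr ⟨T.nodup_toList, by simp, by simpa⟩) ?_
    intro y hy
    rcases List.mem_append.mp hy with hy | hy
    · exact hT (by simpa using hy)
    · exact List.mem_singleton.mp hy ▸ hz
  have hperm := List.subperm_append_diff_self_of_count_le fun x _ => hsub.count_le x
  have hT' := isWeaklyRegular_of_perm_of_subset_maximalIdeal h hperm.symm hrs
  rw [List.append_assoc, isWeaklyRegular_append_iff, List.singleton_append,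
    isWeaklyRegular_cons_iff] at hT'
  have hspan : Ideal.ofList T.toList = Ideal.span (T : Set B) := by
    rw [Ideal.ofList, ← List.coe_toFinset, Finset.toList_toFinset]
  exact hspan ▸ hT'.2.1

lemma exists_isSMulRegular_mem_maximalIdeal {M : Type*} [AddCommGroup M] [Module B M]
    [Module.Finite B M] (h : maximalIdeal B ∉ associatedPrimes B M) :
    ∃ a ∈ maximalIdeal B, IsSMulRegular M a := by
  by_contra! hreg
  refine h ((Ideal.subset_iUnion_iff_mem_of_isMaximal_of_finite (associatedPrimes.finite B M) ⊥ ⊥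
    (fun I hI _ _ => hI.isPrime) bot_ne_top bot_ne_top).mp ?_)
  rw [biUnion_associatedPrimes_eq_compl_regular]
  exact hreg

theorem exists_isRegularSet_maximalIdeal_mem_associatedPrimes :
    ∃ S : Finset B, ↑S ⊆ (maximalIdeal B : Set B) ∧ IsRegularSet B (S : Set B) ∧
      maximalIdeal B ∈ associatedPrimes B (B ⧸ Ideal.span (S : Set B)) := by
  classical
  obtain ⟨_, ⟨rs, hrs, hreg, rfl⟩, hmax⟩ := set_has_maximal_iff_noetherian.mpr ‹IsNoetherianRing B›
    {I : Ideal B | ∃ rs : List B, (∀ r ∈ rs, r ∈ maximalIdeal B) ∧ IsWeaklyRegular B rs ∧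
      Ideal.ofList rs = I} ⟨⊥, [], by simp⟩
  refine ⟨rs.toFinset, fun r hr => hrs r (by simpa using hr), ?_, ?_⟩
  · simpa using isRegularSet_of_isWeaklyRegular hreg hrs
  rw [List.coe_toFinset]
  change maximalIdeal B ∈ associatedPrimes B (B ⧸ Ideal.ofList rs)
  by_contra hass
  obtain ⟨a, ha, hareg⟩ := exists_isSMulRegular_mem_maximalIdeal hass
  refine hmax _ ⟨rs ++ [a], ?_, ?_, rfl⟩ ?_
  · simpa [or_imp, forall_and] using ⟨hrs, ha⟩
  · rw [isWeaklyRegular_append_iff, isWeaklyRegular_singleton_iff, smul_eq_mul, Ideal.mul_top]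
    exact ⟨hreg, hareg⟩
  · rw [Ideal.ofList_append, Ideal.ofList_singleton]
    refine left_lt_sup.mpr fun hle => (maximalIdeal.isMaximal B).ne_top ?_
    have ha_mem : a ∈ Ideal.ofList rs := hle (Ideal.mem_span_singleton_self a)
    have hone : (1 : B) ∈ Ideal.ofList rs :=
      (isSMulRegular_quotient_iff_mem_of_smul_mem _ _).mp hareg 1 (by simpa using ha_mem)
    exact (Ideal.eq_top_iff_one _).mpr (Ideal.span_le.mpr hrs hone)

end MaximalRegularSet

section FactorizationOfFlatLocalization

variable {B P M : Type*} [CommRing B] [AddCommGroup P] [AddCommGroup M] [Module B P] [Module B M]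

lemma factorsThroughFinFree_comp {ι : Type*} [Finite ι] (φ : P →ₗ[B] (ι → B))
    (ψ : (ι → B) →ₗ[B] M) : FactorsThroughFinFree (ψ ∘ₗ φ) := by
  let e := LinearEquiv.funCongrLeft B B (Finite.equivFin ι).symm
  exact ⟨_, e.toLinearMap ∘ₗ φ, ψ ∘ₗ e.symm.toLinearMap, by ext; simp⟩

lemma FactorsThroughFinFree.add {f g : P →ₗ[B] M} (hf : FactorsThroughFinFree f)
    (hg : FactorsThroughFinFree g) : FactorsThroughFinFree (f + g) := by
  obtain ⟨k, φ, ψ, rfl⟩ := hf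
  obtain ⟨l, φ', ψ', rfl⟩ := hg
  let e := LinearEquiv.sumArrowLequivProdArrow (Fin k) (Fin l) B B
  convert factorsThroughFinFree_comp (e.symm.toLinearMap ∘ₗ φ.prod φ')
    (ψ.coprod ψ' ∘ₗ e.toLinearMap)
  ext; simp

lemma FactorsThroughFinFree.smul {f : P →ₗ[B] M} (hf : FactorsThroughFinFree f) (a : B) :
    FactorsThroughFinFree (a • f) := by
  obtain ⟨k, φ, ψ, rfl⟩ := hf
  exact ⟨k, φ, a • ψ, LinearMap.smul_comp ..⟩

/-- The ideal of scalars `a` for which `a • f` factors through a finite free module; its zero locus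
is where `f` does not factor locally. -/
def factorIdeal (f : P →ₗ[B] M) : Ideal B where
  carrier := {a | FactorsThroughFinFree (a • f)}
  add_mem' ha hb := by simpa only [Set.mem_ofPred_eq, add_smul] using ha.add hb
  zero_mem' := ⟨0, 0, 0, by simp⟩
  smul_mem' c a ha := by simpa only [Set.mem_ofPred_eq, smul_assoc] using ha.smul c

lemma exists_mem_factorIdeal_of_flat [Module.FinitePresentation B P] (f : P →ₗ[B] M)
    (S : Submonoid B) [Module.Flat B (LocalizedModule S M)] : ∃ s ∈ S, s ∈ factorIdeal f := by
  let ι := LocalizedModule.mkLinearMap S M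
  obtain ⟨k, φ, ψ, hφψ⟩ := Module.Flat.exists_factorization_of_finitePresentation (ι ∘ₗ f)
  let e := Finsupp.linearEquivFunOnFinite B B (Fin k)
  obtain ⟨ψ', s, hψ'⟩ := Module.FinitePresentation.exists_lift_of_isLocalizedModule S ι ψ
  obtain ⟨t, ht⟩ := Module.Finite.exists_smul_of_comp_eq_of_isLocalizedModule S ι (ψ' ∘ₗ φ)
    ((s : B) • f) (by
      rw [← LinearMap.comp_assoc, hψ', LinearMap.comp_smul, hφψ]
      exact LinearMap.smul_comp ..)
  exact ⟨t * s, (t * s).2, k, e.toLinearMap ∘ₗ φ, (t : B) • ψ' ∘ₗ e.symm.toLinearMap, by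
    ext x; simpa [mul_smul, Submonoid.smul_def] using congr($ht x)⟩

lemma factorsUpToPow_of_flat_localizedModule [IsNoetherianRing B] [IsLocalRing B]
    (hM : ∀ Q : Ideal B, [Q.IsPrime] → Q ≠ maximalIdeal B →
      Module.Flat B (LocalizedModule Q.primeCompl M)) {a : B} (ha : a ∈ maximalIdeal B) :
    FactorsUpToPow M a := by
  intro R hR
  suffices a ∈ (factorIdeal R.subtype).radical from this
  rw [Ideal.radical_eq_sInf, Submodule.mem_sInf]
  rintro (Q : Ideal B) ⟨hle, hQ⟩
  have : Q.IsPrime := hQ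
  by_contra haQ
  have := hM Q (by rintro rfl; exact haQ ha)
  have : Module.Finite B R := Module.Finite.iff_fg.mpr hR
  have := Module.finitePresentation_of_finite B R
  obtain ⟨s, hsQ, hs⟩ := exists_mem_factorIdeal_of_flat R.subtype Q.primeCompl
  exact hsQ (hle hs)

end FactorizationOfFlatLocalization

section FlatnessOfAbsolutelyIntegrallyClosed

section Localization

variable {A B T M : Type*} [CommRing A] [CommRing B] [Algebra A B]
  [AddCommGroup T] [Module A T] [AddCommGroup M] [Module A M] [Module B M] [IsScalarTower A B M]

lemma flat_localizedModule_of_isLocalizedModule (S : Submonoid A) [IsLocalization S B]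
    (f : T →ₗ[A] M) [IsLocalizedModule S f] (q : Ideal B) [q.IsPrime]
    [Module.Flat A (LocalizedModule (q.comap (algebraMap A B)).primeCompl T)] :
    Module.Flat B (LocalizedModule q.primeCompl M) := by
  let L := Localization q.primeCompl
  let ι := LocalizedModule.mkLinearMap q.primeCompl M
  have hL := IsLocalization.isLocalization_isLocalization_atPrime_isLocalization S L q
  have hbase : IsBaseChange L (ι.restrictScalars A ∘ₗ f) :=
    (IsLocalizedModule.isBaseChange S B f).comp (IsLocalizedModule.isBaseChange q.primeCompl L ι)
  have := (isLocalizedModule_iff_isBaseChange (q.comap (algebraMap A B)).primeCompl L _).mpr hbase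
  rw [Module.flat_iff_of_isLocalization (R := A) B S]
  exact Module.Flat.of_linearEquiv
    (IsLocalizedModule.iso (q.comap (algebraMap A B)).primeCompl (ι.restrictScalars A ∘ₗ f)).symm

lemma comap_lt_of_ne_maximalIdeal (P : Ideal A) [P.IsPrime] [IsLocalRing B]
    [IsLocalization.AtPrime B P] {q : Ideal B} [q.IsPrime] (hq : q ≠ maximalIdeal B) :
    q.comap (algebraMap A B) < P := by
  rw [← IsLocalization.AtPrime.under_maximalIdeal B P]
  exact (IsLocalization.orderEmbedding P.primeCompl B).lt_iff_lt.mpr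
    (lt_of_le_of_ne (le_maximalIdeal ‹q.IsPrime›.ne_top) hq)

lemma IsAbsIntegrallyClosed.of_isLocalization {T C : Type*} [CommRing T] [CommRing C] [Algebra T C]
    (S : Submonoid T) [IsLocalization S C] (hT : IsAbsIntegrallyClosed T) :
    IsAbsIntegrallyClosed C := by
  intro f hf hdeg
  nontriviality C
  let s := IsLocalization.commonDenom S f.support f.coeff
  obtain ⟨g, hgf, hgdeg, hg⟩ := Polynomial.lifts_and_natDegree_eq_and_monic
    (IsLocalization.scaleRoots_commonDenom_mem_lifts S f (hf.leadingCoeff ▸ one_mem _))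
    ((Polynomial.monic_scaleRoots_iff _).mpr hf)
  obtain ⟨c, hc⟩ := hT g hg (by rwa [hgdeg, Polynomial.natDegree_scaleRoots])
  refine ⟨IsLocalization.mk' C c s,
    ((IsLocalization.map_units C s).pow f.natDegree).mul_right_eq_zero.mp ?_⟩
  rw [← Polynomial.scaleRoots_eval_mul, mul_comm, IsLocalization.mk'_spec, ← hgf,
    Polynomial.eval_map_algebraMap, Polynomial.aeval_algebraMap_apply,
    Polynomial.coe_aeval_eq_eval, hc, map_zero]

end Localization

variable {A C : Type u} [CommRing A] [IsNoetherianRing A] [CommRing C] [IsDomain C] [Algebra A C]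
  [FaithfulSMul A C] [Algebra.IsIntegral A C] (p : ℕ) [Fact p.Prime] [CharP C p] {n : ℕ}

include p

theorem flat_of_isAbsIntegrallyClosed_of_isLocalRing [IsLocalRing A]
    (hC : IsAbsIntegrallyClosed C) (hn : HasFlatDimLE A n C)
    (hloc : ∀ Q : Ideal A, [Q.IsPrime] → Q ≠ maximalIdeal A →
      Module.Flat A (LocalizedModule Q.primeCompl C)) : Module.Flat A C := by
  obtain ⟨S, hSm, hS, hass⟩ := exists_isRegularSet_maximalIdeal_mem_associatedPrimes (B := A)
  refine flat_of_hasFlatDimLE hS hass hn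
    (hS.of_isAbsIntegrallyClosed p hC fun x hx => ⟨?_, ?_⟩) hloc
  · rintro rfl
    exact (hS.isSMulRegular hx).not_zero
  · exact factorsUpToPow_of_flat_localizedModule hloc (hSm hx)

lemma flat_localizedModule_of_forall_lt (hC : IsAbsIntegrallyClosed C) (hn : HasFlatDimLE A n C)
    (P : Ideal A) [P.IsPrime]
    (hlt : ∀ Q : Ideal A, [Q.IsPrime] → Q < P → Module.Flat A (LocalizedModule Q.primeCompl C)) :
    Module.Flat A (LocalizedModule P.primeCompl C) := by
  let A' := Localization.AtPrime P
  let C' := Localization (Algebra.algebraMapSubmonoid C P.primeCompl)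
  let ι := (IsScalarTower.toAlgHom A C C').toLinearMap
  have hinj : Function.Injective (algebraMap A C) := FaithfulSMul.algebraMap_injective A C
  have hle : Algebra.algebraMapSubmonoid C P.primeCompl ≤ nonZeroDivisors C := by
    rintro _ ⟨s, hs, rfl⟩
    exact mem_nonZeroDivisors_of_ne_zero fun h0 =>
      hs ((map_eq_zero_iff _ hinj).mp h0 ▸ P.zero_mem)
  have : IsDomain C' := IsLocalization.isDomain_localization hle
  have : CharP C' p := charP_of_injective_algebraMap (IsLocalization.injective C' hle) p
  have : Algebra.IsIntegral A' C' := ⟨isIntegral_localization (M := P.primeCompl)⟩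
  have : FaithfulSMul A' C' := (faithfulSMul_iff_algebraMap_injective A' C').mpr
    (localizationAlgebra_injective A' C' hinj)
  have : Module.Flat A' C' := by
    refine flat_of_isAbsIntegrallyClosed_of_isLocalRing p
      (hC.of_isLocalization (Algebra.algebraMapSubmonoid C P.primeCompl))
      (hn.of_isLocalizedModule P.primeCompl A' ι) fun q _ hq => ?_
    have := hlt _ (comap_lt_of_ne_maximalIdeal P hq)
    exact flat_localizedModule_of_isLocalizedModule P.primeCompl ι q
  have : Module.Flat A C' := (Module.flat_iff_of_isLocalization A' P.primeCompl C').mp this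
  exact Module.Flat.of_linearEquiv (IsLocalizedModule.iso P.primeCompl ι)

theorem flat_of_isAbsIntegrallyClosed (hC : IsAbsIntegrallyClosed C) (hn : HasFlatDimLE A n C) :
    Module.Flat A C := by
  suffices H : ∀ P : PrimeSpectrum A,
      Module.Flat A (LocalizedModule P.asIdeal.primeCompl C) from
    Module.flat_of_localized_maximal C fun P _ => H ⟨P, inferInstance⟩
  intro P
  induction hP : P.asIdeal.height using WellFoundedLT.induction generalizing P with | ind h ih
  exact flat_localizedModule_of_forall_lt p hC hn P.asIdeal fun Q _ hQ =>
    ih _ (hP ▸ Ideal.height_strict_mono_of_isPrime hQ) ⟨Q, inferInstance⟩ rfl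

end FlatnessOfAbsolutelyIntegrallyClosed

section FlatDimensionOfRegularRings

open Function LinearMap

variable {A : Type u} [CommRing A] [IsNoetherianRing A] [IsLocalRing A] {S : Finset A}

lemma flat_of_isRegularSet_of_span_eq_maximalIdeal
    (hS : Ideal.span (S : Set A) = maximalIdeal A) {N : Type*} [AddCommGroup N] [Module A N]
    [Module.Finite A N] (hN : IsRegularSet N (S : Set A)) : Module.Flat A N := by
  obtain ⟨k, g, hg⟩ := Module.Finite.exists_fin' A N
  have hinj : Injective ((ker g).subtype.rTensor (A ⧸ maximalIdeal A)) :=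
    rTensor_quotient_injective_of_inf_le (hS ▸ hN.ker_inf_smul_top_le hg subset_rfl)
  have := Module.free_of_lTensor_residueField_injective _ _ hg (exact_subtype_ker_map g)
    ((lTensor_inj_iff_rTensor_inj ..).mpr hinj)
  infer_instance

lemma hasFlatDimLE_of_isRegularSet (hA : IsRegularSet A (S : Set A))
    (hS : Ideal.span (S : Set A) = maximalIdeal A) {n : ℕ} {N : Type u} [AddCommGroup N]
    [Module A N] [Module.Finite A N]
    (hN : ∀ T ⊆ S, T.card + n ≤ S.card → IsRegularSet N (T : Set A)) : HasFlatDimLE A n N := by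
  classical
  induction n generalizing N with
  | zero => exact flat_of_isRegularSet_of_span_eq_maximalIdeal hS (hN S subset_rfl le_rfl)
  | succ n ih =>
    obtain ⟨k, g, hg⟩ := Module.Finite.exists_fin' A N
    refine ⟨Fin k → A, inferInstance, inferInstance, g, inferInstance, hg, ih fun T hTS hT => ?_⟩
    refine (hA.mono (Finset.coe_subset.mpr hTS)).ker (fun w hw => ?_) hg
    rw [← Finset.coe_erase]
    refine hN _ ((T.erase_subset w).trans hTS) ?_
    have := Finset.card_erase_add_one (Finset.mem_coe.mp hw)
    omega

theorem hasFlatDimLE_card_of_isRegularSet (hA : IsRegularSet A (S : Set A))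
    (hS : Ideal.span (S : Set A) = maximalIdeal A) (M : Type u) [AddCommGroup M] [Module A M] :
    HasFlatDimLE A S.card M :=
  hasFlatDimLE_of_forall_quotient (fun _ => hasFlatDimLE_of_isRegularSet hA hS fun T _ hT => by
    have : T = ∅ := Finset.card_eq_zero.mp (by omega)
    subst this
    exact fun U _ z hz => (Finset.notMem_empty z hz).elim) M

end FlatDimensionOfRegularRings

section PowerSeries

open MvPowerSeries

section Span

variable {σ k : Type*} [CommRing k]

lemma mvPowerSeries_mem_span_X_iff {S : Finset σ} {f : MvPowerSeries σ k} :
    f ∈ Ideal.span (X '' (S : Set σ)) ↔ ∀ e : σ →₀ ℕ, (∀ i ∈ S, e i = 0) → coeff e f = 0 := by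
  classical
  constructor
  · intro hf e he
    induction hf using Submodule.span_induction generalizing e with
    | mem x hx =>
      obtain ⟨i, hi, rfl⟩ := hx
      exact X_dvd_iff.mp dvd_rfl e (he i hi)
    | zero => rw [map_zero]
    | add x y _ _ hx hy => rw [map_add, hx e he, hy e he, add_zero]
    | smul a x _ hx =>
      rw [smul_eq_mul, coeff_mul]
      refine Finset.sum_eq_zero fun z hz => ?_
      have hze := Finset.HasAntidiagonal.mem_antidiagonal.mp hz
      rw [hx z.2 fun i hi => ?_, mul_zero]
      have := he i hi
      rw [← hze, Finsupp.add_apply] at this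
      omega
  · intro hf
    induction S using Finset.induction_on generalizing f with
    | empty => simpa [MvPowerSeries.ext_iff] using hf
    | insert i S _ ih =>
      let f₀ : MvPowerSeries σ k := fun e => if e i = 0 then coeff e f else 0
      have coeff_f₀ (e : σ →₀ ℕ) : coeff e f₀ = if e i = 0 then coeff e f else 0 := rfl
      have hdvd : X i ∣ f - f₀ := X_dvd_iff.mpr fun e he => by simp [coeff_f₀, he]
      have hf₀ : f₀ ∈ Ideal.span (X '' (S : Set σ)) := ih fun e he => by
        rw [coeff_f₀]
        split_ifs with hei
        · exact hf e (Finset.forall_mem_insert .. |>.mpr ⟨hei, he⟩)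
        · rfl
      rw [Finset.coe_insert, Set.image_insert_eq, Ideal.span_insert, ← sub_add_cancel f f₀]
      exact add_mem (Ideal.mem_sup_left (Ideal.mem_span_singleton.mpr hdvd))
        (Ideal.mem_sup_right hf₀)

lemma span_X_image_eq_ker_rescale [DecidableEq σ] (S : Finset σ) :
    Ideal.span (X '' (S : Set σ)) =
      RingHom.ker (rescale (R := k) fun i => if i ∈ S then 0 else 1) := by
  ext f
  rw [mvPowerSeries_mem_span_X_iff, RingHom.mem_ker, MvPowerSeries.ext_iff]
  refine forall_congr' fun e => ?_
  rw [coeff_rescale, map_zero]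
  by_cases he : ∀ i ∈ S, e i = 0
  · rw [Finsupp.prod, Finset.prod_eq_one fun i _ => ?_, one_mul]
    · exact ⟨fun h => h he, fun h _ => h⟩
    · by_cases hi : i ∈ S <;> simp [he, hi]
  · obtain ⟨i, hi, hei⟩ : ∃ i ∈ S, e i ≠ 0 := by simpa using he
    rw [Finsupp.prod, Finset.prod_eq_zero (Finsupp.mem_support_iff.mpr hei) (by simp [hi, hei]),
      zero_mul]
    exact ⟨fun _ => rfl, fun _ h => (he h).elim⟩

lemma isPrime_span_X_image [IsDomain k] (S : Finset σ) :
    (Ideal.span (X '' (S : Set σ)) : Ideal (MvPowerSeries σ k)).IsPrime := by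
  classical
  have : IsDomain (MvPowerSeries σ k) := NoZeroDivisors.to_isDomain _
  rw [span_X_image_eq_ker_rescale]
  exact RingHom.ker_isPrime _

lemma mvPowerSeries_X_injective [Nontrivial k] :
    Function.Injective (X : σ → MvPowerSeries σ k) := fun _ _ => X_inj.mp

lemma isRegularSet_range_X :
    IsRegularSet (MvPowerSeries σ k) (Set.range (X : σ → MvPowerSeries σ k)) := by
  classical
  rintro T hT _ ⟨j, rfl⟩ hjT
  rw [← Set.image_univ, Finset.subset_set_image_iff] at hT
  obtain ⟨S, -, rfl⟩ := hT
  have hjS : j ∉ S := fun h => hjT (Finset.mem_image_of_mem _ h)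
  rw [isSMulRegular_quotient_iff_mem_of_smul_mem]
  simp only [smul_eq_mul, Ideal.mul_top, Finset.coe_image, mvPowerSeries_mem_span_X_iff]
  intro f hf e he
  have hcoeff := hf (Finsupp.single j 1 + e) fun i hi => by
    rw [Finsupp.add_apply, he i hi, Finsupp.single_eq_of_ne (ne_of_mem_of_not_mem hi hjS)]
  rwa [X, coeff_add_monomial_mul, one_mul] at hcoeff

end Span

variable {d : ℕ} {k : Type*} [Field k]

theorem span_range_X_eq_maximalIdeal :
    Ideal.span (Set.range (X : Fin d → MvPowerSeries (Fin d) k)) =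
      maximalIdeal (MvPowerSeries (Fin d) k) := by
  classical
  ext f
  rw [← Set.image_univ, ← Finset.coe_univ, mvPowerSeries_mem_span_X_iff,
    mem_maximalIdeal, mem_nonunits_iff, isUnit_iff_constantCoeff, isUnit_iff_ne_zero, not_not]
  refine ⟨fun h => h 0 (by simp), fun h e he => ?_⟩
  obtain rfl : e = 0 := by ext i; exact he i (Finset.mem_univ i)
  exact h

theorem hasFlatDimLE_mvPowerSeries {k : Type u} [Field k] (M : Type u) [AddCommGroup M]
    [Module (MvPowerSeries (Fin d) k) M] : HasFlatDimLE (MvPowerSeries (Fin d) k) d M := by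
  classical
  let S : Finset (MvPowerSeries (Fin d) k) := Finset.univ.image X
  have hcoe : (S : Set (MvPowerSeries (Fin d) k)) = Set.range X := by simp [S]
  have hcard : S.card = d := by
    rw [Finset.card_image_of_injective _ mvPowerSeries_X_injective, Finset.card_fin]
  have hflat : HasFlatDimLE (MvPowerSeries (Fin d) k) S.card M :=
    hasFlatDimLE_card_of_isRegularSet (hcoe ▸ isRegularSet_range_X)
      (hcoe ▸ span_range_X_eq_maximalIdeal) M
  rwa [hcard] at hflat

theorem ringKrullDim_mvPowerSeries_le : ringKrullDim (MvPowerSeries (Fin d) k) ≤ d := by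
  rw [← maximalIdeal_height_eq_ringKrullDim]
  have hmin : maximalIdeal (MvPowerSeries (Fin d) k) ∈
      (Ideal.span (Set.range (X : Fin d → MvPowerSeries (Fin d) k))).minimalPrimes := by
    rw [span_range_X_eq_maximalIdeal, Ideal.minimalPrimes_eq_subsingleton_self]
    exact Set.mem_singleton _
  have hheight := Ideal.height_le_card_of_mem_minimalPrimes_span (Set.finite_range _) hmin
  rw [Set.ncard_range_of_injective mvPowerSeries_X_injective, Nat.card_fin] at hheight
  exact_mod_cast hheight

end PowerSeries

section CoefficientField

open MvPolynomial Algebra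

lemma subsingleton_h1Cotangent_iff_forall_mem_ker_sq {A B ι : Type*} [CommRing A] [CommRing B]
    [Algebra A B] (P : Generators A B ι) :
    Subsingleton (H1Cotangent A B) ↔
      ∀ f ∈ RingHom.ker (aeval (R := A) P.val), (∀ i, aeval P.val (pderiv i f) = 0) →
        f ∈ RingHom.ker (aeval (R := A) P.val) ^ 2 := by
  have : FormallySmooth A P.toExtension.Ring :=
    inferInstanceAs (FormallySmooth A (MvPolynomial ι A))
  rw [← P.toExtension.cotangentComplex_injective_iff, injective_iff_map_eq_zero,
    Extension.Cotangent.mk_surjective.forall, Subtype.forall, ← P.ker_eq_ker_aeval_val]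
  refine forall_congr' fun f => forall_congr' fun hf => ?_
  rw [Extension.cotangentComplex_mk, Extension.Cotangent.mk_eq_zero_iff,
    ← P.cotangentSpaceBasis.repr.map_eq_zero_iff, DFunLike.ext_iff]
  exact imp_congr_left
    (forall_congr' fun i => iff_of_eq (congrArg (· = 0) (P.cotangentSpaceBasis_repr_one_tmul f i)))

-- A cycle of the cotangent complex involves finitely many elements of `L`, so it lives over a
-- finitely generated subextension.
theorem formallySmooth_of_perfectField (K L : Type*) [Field K] [PerfectField K] [Field L]
    [Algebra K L] : FormallySmooth K L := by
  refine ⟨inferInstance, (subsingleton_h1Cotangent_iff_forall_mem_ker_sq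
    (Generators.self K L)).mpr fun f hf hdf => ?_⟩
  obtain ⟨E, hE, hfE⟩ : ∃ E : IntermediateField K L, EssFiniteType K E ∧ (f.vars : Set L) ⊆ E :=
    ⟨.adjoin K f.vars, IntermediateField.essFiniteType_iff.mpr ⟨_, rfl⟩,
      IntermediateField.subset_adjoin K _⟩
  obtain ⟨g, rfl⟩ := exists_rename_eq_of_vars_subset_range f ((↑) : E → L) Subtype.val_injective
    (by simpa using hfE)
  have aeval_rename_val (h : MvPolynomial E K) :
      aeval (Generators.self K L).val (rename ((↑) : E → L) h) =
        (aeval (Generators.self K E).val h : E) := by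
    rw [aeval_rename]
    exact (comp_aeval_apply _ E.val h).symm
  have hg := (subsingleton_h1Cotangent_iff_forall_mem_ker_sq (Generators.self K E)).mp
    inferInstance g (Subtype.ext ((aeval_rename_val g).symm.trans hf)) fun i => Subtype.ext <| by
      rw [← aeval_rename_val, ← pderiv_rename Subtype.val_injective]
      exact hdf i
  refine (Ideal.pow_right_mono ?_ 2).trans (Ideal.le_comap_pow (rename ((↑) : E → L)) 2) hg
  intro h hh
  exact (aeval_rename_val h).trans (congrArg Subtype.val hh)

theorem exists_residueField_section (R : Type*) [CommRing R] [IsLocalRing R]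
    [IsAdicComplete (maximalIdeal R) R] (p : ℕ) [Fact p.Prime] [CharP R p] :
    ∃ f : ResidueField R →+* R, (residue R).comp f = RingHom.id (ResidueField R) := by
  let : Algebra (ZMod p) R := ZMod.algebra R p
  have := formallySmooth_of_perfectField (ZMod p) (ResidueField R)
  obtain ⟨f, hf⟩ := Algebra.FormallySmooth.exists_mkₐ_comp_eq_of_isAdicComplete (R := ZMod p)
    (I := maximalIdeal R) (AlgHom.id (ZMod p) (ResidueField R))
  exact ⟨f, RingHom.ext fun c => AlgHom.congr_fun hf c⟩

end CoefficientField

section CompleteRings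

theorem exists_mvPowerSeries_ringHom {σ A R : Type*} [Finite σ] [CommRing A] [CommRing R]
    (I : Ideal R) [IsAdicComplete I R] (f : A →+* R) {x : σ → R} (hx : ∀ i, x i ∈ I) :
    ∃ φ : MvPowerSeries σ A →+* R,
      (∀ i, φ (MvPowerSeries.X i) = x i) ∧ ∀ a, φ (MvPowerSeries.C a) = f a := by
  let : WithIdeal R := ⟨I⟩
  let : UniformSpace A := ⊥
  have : T2Space R := (IsAdic.isHausdorff_iff (I := I) rfl).mp inferInstance
  have : CompleteSpace R := (IsAdic.isPrecomplete_iff (I := I) rfl).mp inferInstance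
  have hf : Continuous f := continuous_of_discreteTopology
  have hxI : MvPowerSeries.HasEval x :=
    { hpow := fun i => I.hasBasis_nhds_zero_adic.tendsto_right_iff.mpr fun n _ =>
        Filter.eventually_atTop.mpr ⟨n, fun m hm =>
          Ideal.pow_le_pow_right hm (Ideal.pow_mem_pow (hx i) m)⟩
      tendsto_zero := by simp [Filter.cofinite_eq_bot] }
  exact ⟨MvPowerSeries.eval₂Hom hf hxI,
    fun i => by rw [MvPowerSeries.coe_eval₂Hom, MvPowerSeries.eval₂_X],
    fun a => by rw [MvPowerSeries.coe_eval₂Hom, MvPowerSeries.eval₂_C]⟩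

lemma isPrecomplete_pi {ι A : Type*} [Finite ι] [CommRing A] (I : Ideal A) [IsPrecomplete I A] :
    IsPrecomplete I (ι → A) := by
  classical
  cases nonempty_fintype ι
  refine AdicCompletion.of_surjective_iff.mp fun z => ?_
  choose v hv using fun i =>
    AdicCompletion.of_surjective I A (AdicCompletion.pi I (fun _ : ι => A) z i)
  refine ⟨v, (AdicCompletion.piEquivOfFintype I fun _ : ι => A).injective ?_⟩
  rw [AdicCompletion.piEquivOfFintype_apply, AdicCompletion.piEquivOfFintype_apply]
  exact funext hv

lemma finite_of_fg_sup_smul_top_eq_top {A M : Type*} [CommRing A] [AddCommGroup M] [Module A M]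
    (I : Ideal A) [IsPrecomplete I A] [IsHausdorff I M] {F : Submodule A M} (hF : F.FG)
    (hFI : F ⊔ I • ⊤ = ⊤) : Module.Finite A M := by
  obtain ⟨n, w, rfl⟩ := Submodule.fg_iff_exists_fin_generating_family.mp hF
  have := isPrecomplete_pi (ι := Fin n) I
  refine Module.Finite.of_surjective (Fintype.linearCombination A w)
    (surjective_of_mkQ_comp_surjective (I := I) (LinearMap.range_eq_top.mp ?_))
  rw [LinearMap.range_comp, Fintype.range_linearCombination, Submodule.map_mkQ_eq_top, sup_comm,
    hFI]

section ResidueSurjective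

variable {A R M : Type*} [CommRing A] [CommRing R] [Algebra A R] [AddCommGroup M] [Module A M]
  [Module R M] [IsScalarTower A R M] {m : Ideal R}

lemma restrictScalars_span_le_span_sup_smul (hm : ∀ r : R, ∃ a : A, r - algebraMap A R a ∈ m)
    (s : Set M) : (Submodule.span R s).restrictScalars A ≤
      Submodule.span A s ⊔ (m • Submodule.span R s).restrictScalars A := by
  intro z hz
  induction hz using Submodule.span_induction with
  | mem z hz => exact Submodule.mem_sup_left (Submodule.subset_span hz)
  | zero => exact zero_mem _
  | add z w _ _ hz hw => exact add_mem hz hw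
  | smul r z hzs hz =>
    obtain ⟨a, ha⟩ := hm r
    have hrz : r • z = a • z + (r - algebraMap A R a) • z := by
      rw [sub_smul, algebraMap_smul, add_sub_cancel]
    rw [hrz]
    have hmz : (r - algebraMap A R a) • z ∈ m • Submodule.span R s :=
      Submodule.smul_mem_smul ha hzs
    exact add_mem (Submodule.smul_mem _ a hz) (Submodule.mem_sup_right hmz)

lemma exists_fg_sup_pow_smul_top_eq_top [IsNoetherian R M]
    (hm : ∀ r : R, ∃ a : A, r - algebraMap A R a ∈ m) (n : ℕ) :
    ∃ F : Submodule A M, F.FG ∧ F ⊔ (m ^ n • (⊤ : Submodule R M)).restrictScalars A = ⊤ := by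
  induction n with
  | zero => exact ⟨⊥, Submodule.fg_bot, by simp⟩
  | succ n ih =>
    obtain ⟨F, hF, hFn⟩ := ih
    obtain ⟨t, ht⟩ := IsNoetherian.noetherian (m ^ n • (⊤ : Submodule R M))
    refine ⟨F ⊔ Submodule.span A t, hF.sup ⟨t, rfl⟩, top_le_iff.mp ?_⟩
    rw [← hFn, sup_assoc, pow_succ', Submodule.mul_smul, ← ht]
    exact sup_le_sup_left (restrictScalars_span_le_span_sup_smul hm (t : Set M)) F

theorem finite_of_pow_le_map [IsNoetherianRing R]
    (hm : ∀ r : R, ∃ a : A, r - algebraMap A R a ∈ m) (I : Ideal A) [IsPrecomplete I A]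
    [IsHausdorff I R] {n : ℕ} (hn : m ^ n ≤ I.map (algebraMap A R)) : Module.Finite A R := by
  obtain ⟨F, hF, hFn⟩ := exists_fg_sup_pow_smul_top_eq_top (M := R) hm n
  refine finite_of_fg_sup_smul_top_eq_top I hF (top_le_iff.mp (hFn.ge.trans ?_))
  rw [smul_eq_mul, Ideal.mul_top, Ideal.smul_top_eq_map]
  exact sup_le_sup_left (Submodule.restrictScalars_mono A hn) F

end ResidueSurjective

lemma ringKrullDim_le_of_isIntegral {A B : Type*} [CommRing A] [CommRing B] [Algebra A B]
    [Algebra.IsIntegral A B] : ringKrullDim B ≤ ringKrullDim A :=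
  Order.krullDim_le_of_strictMono (PrimeSpectrum.comap (algebraMap A B)) fun _ _ hlt =>
    Ideal.IsIntegral.comap_lt_comap (R := A) hlt

lemma injective_of_isIntegral_of_ringKrullDim_le {A B : Type*} [CommRing A] [IsDomain A]
    [CommRing B] {φ : A →+* B} (hφ : φ.IsIntegral) {d : ℕ} (hA : ringKrullDim A ≤ d)
    (hB : d ≤ ringKrullDim B) : Function.Injective φ := by
  refine (injective_iff_map_eq_zero φ).mpr fun a ha => by_contra fun ha0 => ?_
  have hrange := ringKrullDim_succ_le_of_surjective φ.rangeRestrict φ.rangeRestrict_surjective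
    (mem_nonZeroDivisors_of_ne_zero ha0) (Subtype.ext ha)
  have : Algebra.IsIntegral φ.range B :=
    ⟨RingHom.IsIntegral.tower_top φ.rangeRestrict φ.range.subtype hφ⟩
  have hdd : (d : WithBot ℕ∞) + 1 ≤ d :=
    (add_le_add_left (hB.trans (ringKrullDim_le_of_isIntegral (A := φ.range))) 1).trans
      (hrange.trans hA)
  have hdd' : d + 1 ≤ d := by exact_mod_cast hdd
  omega

theorem exists_mvPowerSeries_ringHom_isIntegral_injective {R : Type*} [CommRing R]
    [IsNoetherianRing R] [IsLocalRing R] [IsAdicComplete (maximalIdeal R) R] (p : ℕ)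
    [Fact p.Prime] [CharP R p] {d : ℕ} {x : Fin d → R} (hd : ringKrullDim R = d)
    (hx : (Ideal.span (Set.range x)).radical = maximalIdeal R) :
    ∃ φ : MvPowerSeries (Fin d) (ResidueField R) →+* R,
      (∀ i, φ (MvPowerSeries.X i) = x i) ∧ φ.IsIntegral ∧ Function.Injective φ := by
  obtain ⟨f, hf⟩ := exists_residueField_section R p
  obtain ⟨φ, hφX, hφC⟩ := exists_mvPowerSeries_ringHom (maximalIdeal R) f (x := x) fun i =>
    hx.le (Ideal.le_radical (Ideal.subset_span ⟨i, rfl⟩))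
  let : Algebra (MvPowerSeries (Fin d) (ResidueField R)) R := φ.toAlgebra
  let I : Ideal (MvPowerSeries (Fin d) (ResidueField R)) :=
    Ideal.span (Set.range MvPowerSeries.X)
  have hI : I.map (algebraMap _ R) = Ideal.span (Set.range x) := by
    rw [Ideal.map_span, ← Set.range_comp]
    exact congrArg (fun y => Ideal.span (Set.range y)) (funext hφX)
  have hresidue (r : R) : ∃ a : MvPowerSeries (Fin d) (ResidueField R),
      r - algebraMap _ R a ∈ maximalIdeal R := by
    refine ⟨MvPowerSeries.C (residue R r), ?_⟩
    rw [RingHom.algebraMap_toAlgebra, hφC, ← residue_eq_zero_iff, map_sub, sub_eq_zero]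
    exact (RingHom.congr_fun hf (residue R r)).symm
  have hproper : Ideal.span (Set.range x) ≠ ⊤ := fun htop =>
    (maximalIdeal.isMaximal R).ne_top (by rw [← hx, htop, Ideal.radical_top])
  have : IsHausdorff I R :=
    IsHausdorff.map_algebraMap_iff.mp (hI ▸ IsHausdorff.of_isLocalRing _ R hproper)
  obtain ⟨n, hn⟩ := Ideal.exists_radical_pow_le_of_fg (Ideal.span (Set.range x))
    (IsNoetherian.noetherian _)
  have := finite_of_pow_le_map hresidue I (n := n) (by rwa [hI, ← hx])
  have hφint : φ.IsIntegral := fun r => Algebra.IsIntegral.isIntegral (R := MvPowerSeries _ _) r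
  have : IsDomain (MvPowerSeries (Fin d) (ResidueField R)) := NoZeroDivisors.to_isDomain _
  exact ⟨φ, hφX, hφint,
    injective_of_isIntegral_of_ringKrullDim_le hφint ringKrullDim_mvPowerSeries_le hd.ge⟩

end CompleteRings

section Colon

open Polynomial

lemma mem_map_of_algebraMap_mul_mem_map {A T : Type*} [CommRing A] [CommRing T] [Algebra A T]
    [Module.Flat A T] {I : Ideal A} {a : A} (ha : IsSMulRegular (A ⧸ (I • ⊤ : Submodule A A)) a)
    {t : T} (ht : algebraMap A T a * t ∈ I.map (algebraMap A T)) :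
    t ∈ I.map (algebraMap A T) := by
  have haT := isSMulRegular_quot_smul_top_of_flat (M := T) ha
  rw [isSMulRegular_quotient_iff_mem_of_smul_mem, Ideal.smul_top_eq_map] at haT
  exact haT t (by rwa [Algebra.smul_def])

lemma isTorsionFree_quotient_map_of_flat {A T : Type*} [CommRing A] [CommRing T] [Algebra A T]
    [Module.Flat A T] (P : Ideal A) [P.IsPrime] :
    Module.IsTorsionFree (A ⧸ P) (T ⧸ P.map (algebraMap A T)) := by
  refine .of_smul_eq_zero fun c b hcb => or_iff_not_imp_left.mpr fun hc => ?_
  obtain ⟨a, rfl⟩ := Ideal.Quotient.mk_surjective c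
  obtain ⟨t, rfl⟩ := Ideal.Quotient.mk_surjective b
  rw [Algebra.smul_def, Ideal.Quotient.algebraMap_quotient_map_quotient, ← map_mul] at hcb
  rw [Ideal.Quotient.eq_zero_iff_mem] at hc hcb ⊢
  refine mem_map_of_algebraMap_mul_mem_map ?_ hcb
  rw [smul_eq_mul, Ideal.mul_top, isSMulRegular_quotient_iff_mem_of_smul_mem]
  exact fun b hab => (Ideal.IsPrime.mem_or_mem ‹_› hab).resolve_left hc

-- Write a monic equation of `y` as `y ^ e * h(y) = 0` with `h(0) ≠ 0`; then `h(0)` times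
-- `y ^ e * t` is a multiple of `y ^ (e + 1) * t`.
lemma exists_forall_pow_mul_eq_zero {D B : Type*} [CommRing D] [IsDomain D] [CommRing B]
    [Algebra D B] [Module.IsTorsionFree D B] {y : B} (hy : IsIntegral D y) :
    ∃ e : ℕ, ∀ (m : ℕ) (t : B), y ^ m * t = 0 → y ^ e * t = 0 := by
  obtain ⟨g, hg, hgy⟩ := hy
  obtain ⟨h, hgh, hh⟩ := exists_eq_pow_rootMultiplicity_mul_and_not_dvd g hg.ne_zero 0
  set e := g.rootMultiplicity 0
  rw [C_0, sub_zero] at hgh hh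
  rw [X_dvd_iff] at hh
  have hyh : y ^ e * (aeval y h.divX * y + algebraMap D B (h.coeff 0)) = 0 := by
    rw [← hgy, ← aeval_def, hgh, map_mul, map_pow, aeval_X]
    conv_rhs => rw [← divX_mul_X_add h]
    simp
  refine ⟨e, fun m => ?_⟩
  induction m with
  | zero => exact fun t ht => by rw [pow_zero, one_mul] at ht; rw [ht, mul_zero]
  | succ m ih =>
    intro t ht
    have hyt : y ^ e * (y * t) = 0 := ih _ (by rwa [← mul_assoc, ← pow_succ])
    refine (smul_eq_zero_iff_right hh).mp ?_
    rw [Algebra.smul_def]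
    linear_combination t * hyh - aeval y h.divX * hyt

lemma exists_forall_pow_mul_mem_map {A T : Type*} [CommRing A] [CommRing T] [Algebra A T]
    [Module.Flat A T] (P : Ideal A) [P.IsPrime] {y : T} (hy : IsIntegral A y) :
    ∃ e : ℕ, ∀ (m : ℕ) (t : T), y ^ m * t ∈ P.map (algebraMap A T) →
      y ^ e * t ∈ P.map (algebraMap A T) := by
  have := isTorsionFree_quotient_map_of_flat (T := T) P
  have hy' : IsIntegral (A ⧸ P) (Ideal.Quotient.mk (P.map (algebraMap A T)) y) :=
    (hy.map (Ideal.Quotient.mkₐ A _)).tower_top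
  obtain ⟨e, he⟩ := exists_forall_pow_mul_eq_zero hy'
  refine ⟨e, fun m t ht => ?_⟩
  rw [← Ideal.Quotient.eq_zero_iff_mem, map_mul, map_pow] at ht ⊢
  exact he m _ ht

lemma mem_sup_span_pow_sub_of_mul_mem {T : Type*} [CommRing T] {J : Ideal T} {x y : T}
    (hx : ∀ t, x * t ∈ J → t ∈ J) {e : ℕ}
    (he : ∀ (m : ℕ) (t : T), y ^ m * t ∈ J ⊔ Ideal.span {x} → y ^ e * t ∈ J ⊔ Ideal.span {x})
    {N : ℕ} (hN : e ≤ N) {u : T} (hu : x * u ∈ J ⊔ Ideal.span {y ^ N}) :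
    u ∈ J ⊔ Ideal.span {y ^ (N - e)} := by
  simp only [sup_comm J, Ideal.mem_span_singleton_sup] at he hu ⊢
  obtain ⟨c, j, hj, hcj⟩ := hu
  obtain ⟨v, i, hi, hvi⟩ := he N c ⟨u, -j, neg_mem hj, by linear_combination -hcj⟩
  refine ⟨v, u - v * y ^ (N - e), hx _ ?_, by ring⟩
  have hyN : y ^ N = y ^ (N - e) * y ^ e := by rw [← pow_add, Nat.sub_add_cancel hN]
  have hxuv : x * (u - v * y ^ (N - e)) = j + y ^ (N - e) * i := by
    linear_combination -hcj + c * hyN - y ^ (N - e) * hvi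
  rw [hxuv]
  exact add_mem hj (Ideal.mul_mem_left _ _ hi)

theorem exists_forall_mem_map_span_X_sup_span_pow {σ k T : Type*} [CommRing k] [IsDomain k]
    [CommRing T] [Algebra (MvPowerSeries σ k) T] [Module.Flat (MvPowerSeries σ k) T]
    {S : Finset σ} {j : σ} (hj : j ∉ S) {y : T} (hy : IsIntegral (MvPowerSeries σ k) y) :
    ∃ N₀ : ℕ, 0 < N₀ ∧ ∀ N : ℕ, N₀ ≤ N → ∀ u : T,
      algebraMap (MvPowerSeries σ k) T (MvPowerSeries.X j) * u ∈
          (Ideal.span (MvPowerSeries.X '' (S : Set σ))).map (algebraMap (MvPowerSeries σ k) T) ⊔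
            Ideal.span {y ^ N} →
        u ∈ (Ideal.span (MvPowerSeries.X '' (S : Set σ))).map
          (algebraMap (MvPowerSeries σ k) T) ⊔ Ideal.span {y ^ (N - N₀)} := by
  classical
  have := isPrime_span_X_image (k := k) (insert j S)
  have hXj := isRegularSet_range_X (σ := σ) (k := k) (S.image MvPowerSeries.X)
    (by simp) _ ⟨j, rfl⟩
    (by simpa [mvPowerSeries_X_injective.eq_iff] using hj)
  rw [Finset.coe_image] at hXj
  obtain ⟨e, he⟩ := exists_forall_pow_mul_mem_map (.span (MvPowerSeries.X '' ↑(insert j S))) hy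
  rw [Finset.coe_insert, Set.image_insert_eq, Ideal.span_insert, sup_comm, Ideal.map_sup,
    Ideal.map_span _ {_}, Set.image_singleton] at he
  refine ⟨e + 1, e.succ_pos, fun N hN u hu => mem_sup_span_pow_sub_of_mul_mem
    (fun t => mem_map_of_algebraMap_mul_mem_map hXj) (fun m t ht => ?_) hN hu⟩
  rw [pow_succ', mul_assoc]
  exact Ideal.mul_mem_left _ y (he m t ht)

end Colon

section AbsoluteIntegralClosure

lemma isAbsIntegrallyClosed_integralClosure (R K : Type*) [CommRing R] [Field K] [IsAlgClosed K]
    [Algebra R K] : IsAbsIntegrallyClosed (integralClosure R K) := by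
  intro f hf hdeg
  have hinj : Function.Injective (algebraMap (integralClosure R K) K) := Subtype.val_injective
  obtain ⟨c, hc⟩ := IsAlgClosed.exists_aeval_eq_zero_of_injective K hinj f
    (Polynomial.natDegree_pos_iff_degree_pos.mp hdeg).ne'
  have hcR : IsIntegral R c := isIntegral_trans c ⟨f, hf, hc⟩
  refine ⟨⟨c, hcR⟩, hinj ?_⟩
  rw [map_zero, ← Polynomial.aeval_algebraMap_apply_eq_algebraMap_eval]
  exact hc

lemma faithfulSMul_RPlus (R : Type) [CommRing R] [IsDomain R] : FaithfulSMul R (RPlus R) :=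
  have := FaithfulSMul.trans R (FractionRing R) (AlgebraicClosure (FractionRing R))
  .tower_bot R (RPlus R) (AlgebraicClosure (FractionRing R))

end AbsoluteIntegralClosure

theorem flat_mvPowerSeries_of_isAbsIntegrallyClosed {k T : Type u} [Field k] [CommRing T]
    [IsDomain T] {d : ℕ} [Algebra (MvPowerSeries (Fin d) k) T]
    [FaithfulSMul (MvPowerSeries (Fin d) k) T] [Algebra.IsIntegral (MvPowerSeries (Fin d) k) T]
    (p : ℕ) [Fact p.Prime] [CharP T p] (hT : IsAbsIntegrallyClosed T) :
    Module.Flat (MvPowerSeries (Fin d) k) T :=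
  flat_of_isAbsIntegrallyClosed p hT (hasFlatDimLE_mvPowerSeries T)

theorem stmt19_general {R T : Type u} [CommRing R] [IsNoetherianRing R] [IsLocalRing R]
    [IsAdicComplete (maximalIdeal R) R] (p : ℕ) [Fact p.Prime] [CharP R p]
    [CommRing T] [IsDomain T] [Algebra R T] [FaithfulSMul R T] [Algebra.IsIntegral R T]
    (hT : IsAbsIntegrallyClosed T) {d : ℕ} (x : Fin d → R) (hd : ringKrullDim R = d)
    (hx : (Ideal.span (Set.range x)).radical = maximalIdeal R)
    {S : Set (Fin d)} {j : Fin d} (hj : j ∉ S) (y : T) :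
    ∃ N₀ : ℕ, 0 < N₀ ∧ ∀ N : ℕ, N₀ ≤ N → ∀ u : T,
      algebraMap R T (x j) * u ∈
          Ideal.span (algebraMap R T '' (x '' S)) ⊔ Ideal.span {y ^ N} →
        u ∈ Ideal.span (algebraMap R T '' (x '' S)) ⊔ Ideal.span {y ^ (N - N₀)} := by
  classical
  obtain ⟨φ, hφX, hφint, hφinj⟩ := exists_mvPowerSeries_ringHom_isIntegral_injective p hd hx
  let A := MvPowerSeries (Fin d) (ResidueField R)
  let : Algebra A T := ((algebraMap R T).comp φ).toAlgebra
  have hRT := FaithfulSMul.algebraMap_injective R T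
  have : CharP T p := charP_of_injective_algebraMap hRT p
  have : FaithfulSMul A T := (faithfulSMul_iff_algebraMap_injective A T).mpr (hRT.comp hφinj)
  have : Algebra.IsIntegral A T :=
    ⟨RingHom.IsIntegral.trans φ (algebraMap R T) hφint Algebra.IsIntegral.isIntegral⟩
  have : Module.Flat A T := flat_mvPowerSeries_of_isAbsIntegrallyClosed p hT
  have hX (i : Fin d) : algebraMap A T (MvPowerSeries.X i) = algebraMap R T (x i) :=
    congrArg (algebraMap R T) (hφX i)
  have hmap : (Ideal.span (MvPowerSeries.X '' ↑S.toFinset)).map (algebraMap A T) =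
      Ideal.span (algebraMap R T '' (x '' S)) := by
    rw [Ideal.map_span, Set.image_image, Set.image_image, Set.coe_toFinset]
    simp only [hX]
  rw [← hX, ← hmap]
  exact exists_forall_mem_map_span_X_sup_span_pow (by simpa using hj)
    (Algebra.IsIntegral.isIntegral y)

/-- For a `d`-dimensional complete local domain `R` of characteristic `p` with
system of parameters `x₁, …, x_d` and `y ∈ R`, there is `N₀ ≥ 1` such that for all `N ≥ N₀`,
`(x₁, …, xₙ, y^N)R⁺ : x_{n+1} ⊆ (x₁, …, xₙ, y^{N-N₀})R⁺`. -/
theorem stmt19 (R : Type) [CommRing R] [IsDomain R] [IsNoetherianRing R] [IsLocalRing R]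
    [IsAdicComplete (maximalIdeal R) R]
    (p : ℕ) [Fact p.Prime] [CharP R p]
    (d : ℕ) (x : Fin d → R) (hx : IsSOP R x)
    (n : ℕ) (hn1 : 1 ≤ n) (hnd : n ≤ d - 1) (y : R) :
    ∃ N₀ : ℕ, 0 < N₀ ∧ ∀ N : ℕ, N₀ ≤ N → ∀ u : RPlus R,
      algebraMap R (RPlus R) (x ⟨n, by omega⟩) * u ∈
          Ideal.span (⇑(algebraMap R (RPlus R)) '' (x '' {i | (i : ℕ) < n})) ⊔
            Ideal.span {algebraMap R (RPlus R) y ^ N} →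
        u ∈ Ideal.span (⇑(algebraMap R (RPlus R)) '' (x '' {i | (i : ℕ) < n})) ⊔
          Ideal.span {algebraMap R (RPlus R) y ^ (N - N₀)} := by
  have := faithfulSMul_RPlus R
  exact stmt19_general p (isAbsIntegrallyClosed_integralClosure R _) x hx.1 hx.2 (lt_irrefl n) _
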